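/- Every binary code of length 16 with exactly 256 codewords and minimum distance 6 is completely transitive. (In particular, the Nordstrom-Robinson code is completely transitive.) -/

import Mathlib

open Set

/-- Distance from a vertex to a code in the binary Hamming space. -/
noncomputable def distToCode {m : ℕ} (C : Set (Fin m → ZMod 2)) (x : Fin m → ZMod 2) : ℕ :=
  sInf {d | ∃ c ∈ C, hammingDist x c = d}

/-- `C` has minimum distance `δ`. -/
def IsMinDist {m : ℕ} (C : Set (Fin m → ZMod 2)) (δ : ℕ) : Prop :=
  (∀ x ∈ C, ∀ y ∈ C, x ≠ y → δ ≤ hammingDist x y) ∧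
  ∃ x ∈ C, ∃ y ∈ C, x ≠ y ∧ hammingDist x y = δ

/-- `C` is completely regular: the number of codewords at distance `k` from `γ`
depends only on `distToCode C γ` and `k`. -/
def IsCompletelyRegular {m : ℕ} (C : Set (Fin m → ZMod 2)) : Prop :=
  ∀ γ γ' : Fin m → ZMod 2, distToCode C γ = distToCode C γ' →
    ∀ k : ℕ, {c ∈ C | hammingDist γ c = k}.ncard = {c ∈ C | hammingDist γ' c = k}.ncard

/-- A permutation of `F_2^m` is an automorphism of the Hamming graph iff it has
the form `x ↦ (x ∘ σ⁻¹) + v` for a coordinate permutation `σ` and `v ∈ F_2^m`. -/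
def IsHammingAut {m : ℕ} (f : Equiv.Perm (Fin m → ZMod 2)) : Prop :=
  ∃ (σ : Equiv.Perm (Fin m)) (v : Fin m → ZMod 2),
    ∀ x : Fin m → ZMod 2, f x = (fun i => x (σ.symm i)) + v

/-- `C` is completely transitive: some group `X` of Hamming-graph automorphisms
preserving `C` has each cell of the distance partition as a single orbit. -/
def IsCompletelyTransitive {m : ℕ} (C : Set (Fin m → ZMod 2)) : Prop :=
  ∃ X : Subgroup (Equiv.Perm (Fin m → ZMod 2)),
    (∀ g ∈ X, IsHammingAut g ∧ ⇑g '' C = C) ∧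
    ∀ i : ℕ, ∀ x : Fin m → ZMod 2, distToCode C x = i →
      {y | distToCode C y = i} = {y | ∃ g ∈ X, g x = y}

/-!
A binary code with length `16`, `256` words and minimum distance `6` attains Delsarte's linear
programming bound. Complementary slackness then fixes how many codewords lie at each distance from
a given vector, and no vector is further than `4` from the code. Translate the code so as to contain
the zero word, and call a set of four coordinates deep if its distance from the code is `4`. By
counting, each triple of coordinates lies in a unique deep set, and the deep sets are the planes of
a structure of affine space over `ZMod 2` on the coordinates. In such affine coordinates the code is
a union of eight cosets of the first order Reed-Muller code, labelled by eight alternating forms on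
`F_2^4` with non-singular pairwise differences (a Kerdock set), and a finite check leaves a single
code once three coordinates have been sent to `0`, `e₀` and `e₁`.

Since these three coordinates are arbitrary, the code is unique up to equivalence and its
stabilizer of the zero word is transitive on ordered triples of coordinates. A vector at distance
`d` from the code differs from a nearest codeword in a set of `d ≤ 4` coordinates. If `d = 4` this
set is deep, hence determined by three of its elements. So two vectors at the same distance from
the code are exchanged by an automorphism: translate a nearest codeword of each to zero and match
the two differences.
-/

namespace NordstromRobinson

section Characters

variable {ι : Type*} [DecidableEq ι]

lemma card_symmDiff_add_two_mul_card_inter (A B : Finset ι) :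
    (symmDiff A B).card + 2 * (A ∩ B).card = A.card + B.card := by
  have hA := Finset.card_sdiff_add_card_inter A B
  have hB := Finset.card_sdiff_add_card_inter B A
  have hdisj : Disjoint (A \ B) (B \ A) := disjoint_sdiff_sdiff
  rw [symmDiff_def, Finset.sup_eq_union, Finset.card_union_of_disjoint hdisj]
  rw [Finset.inter_comm B A] at hB
  omega

lemma even_card_symmDiff_iff {A B : Finset ι} (hB : Even B.card) :
    Even (symmDiff A B).card ↔ Even A.card := by
  have hcard := card_symmDiff_add_two_mul_card_inter A B
  simp only [Nat.even_iff] at hB ⊢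
  omega

/-- The value at `A` of the character of the group `(Finset ι, ∆)` indexed by `U`. -/
def walsh (U A : Finset ι) : ℤ := (-1) ^ (U ∩ A).card

lemma walsh_symmDiff (U A B : Finset ι) :
    walsh U (symmDiff A B) = walsh U A * walsh U B := by
  have hcard := card_symmDiff_add_two_mul_card_inter (U ∩ A) (U ∩ B)
  have hdist : U ∩ symmDiff A B = symmDiff (U ∩ A) (U ∩ B) := inf_symmDiff_distrib_left U A B
  rw [walsh, walsh, walsh, ← pow_add, ← hcard, pow_add, pow_mul, hdist]
  simp

/-- The value at `d` of the `k`-th Krawtchouk polynomial of the binary Hamming scheme of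
length `n`. -/
def krawtchouk (n k d : ℕ) : ℤ :=
  ∑ j ∈ Finset.range (k + 1), (-1) ^ j * d.choose j * (n - d).choose (k - j)

open Polynomial in
lemma coeff_one_sub_X_pow_mul_one_add_X_pow (n k d : ℕ) :
    (((1 : ℤ[X]) - X) ^ d * (1 + X) ^ (n - d)).coeff k = krawtchouk n k d := by
  have hcomp : ((1 : ℤ[X]) - X) ^ d = ((1 + X) ^ d).comp (C (-1) * X) := by
    simp [sub_eq_add_neg]
  have hcoeff (j : ℕ) : (((1 : ℤ[X]) - X) ^ d).coeff j = (-1 : ℤ) ^ j * d.choose j := by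
    rw [hcomp, comp_C_mul_X_coeff, coeff_one_add_X_pow, mul_comm]
  simp only [coeff_mul, hcoeff, coeff_one_add_X_pow, krawtchouk,
    Finset.Nat.sum_antidiagonal_eq_sum_range_succ
      fun i j => (-1) ^ i * (d.choose i : ℤ) * (n - d).choose j]

variable [Fintype ι]

open Polynomial in
lemma sum_walsh (k : ℕ) (A : Finset ι) :
    ∑ U ∈ Finset.powersetCard k Finset.univ, walsh U A =
      krawtchouk (Fintype.card ι) k A.card := by
  have hfactor : ∏ i, (1 + (if i ∈ A then -X else X : ℤ[X])) =
      (1 - X) ^ A.card * (1 + X) ^ (Fintype.card ι - A.card) := by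
    have hsplit (i : ι) :
        1 + (if i ∈ A then -X else X : ℤ[X]) = if i ∈ A then 1 - X else 1 + X := by
      split_ifs <;> ring
    simp only [hsplit, Finset.prod_ite, Finset.prod_const, Finset.filter_mem_eq_inter,
      Finset.univ_inter, Finset.filter_notMem_eq_sdiff, Finset.card_univ_sdiff]
  have hterm (U : Finset ι) :
      ∏ i ∈ U, (if i ∈ A then -X else X : ℤ[X]) = C (walsh U A) * X ^ U.card := by
    have hsign (i : ι) : (if i ∈ A then -X else X : ℤ[X]) = (if i ∈ A then -1 else 1) * X := by
      split_ifs <;> ring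
    simp only [hsign, Finset.prod_mul_distrib, Finset.prod_const, Finset.prod_ite_mem, walsh,
      map_pow, map_neg, map_one]
  rw [← coeff_one_sub_X_pow_mul_one_add_X_pow, ← hfactor, Finset.prod_one_add, finsetSum_coeff]
  simp only [hterm, coeff_C_mul_X_pow, Finset.powerset_univ]
  rw [← Finset.sum_filter]
  refine Finset.sum_congr ?_ fun _ _ => rfl
  ext U
  simp [Finset.mem_powersetCard, eq_comm]

lemma sum_krawtchouk_symmDiff (S T : Finset (Finset ι)) (k : ℕ) :
    ∑ A ∈ S, ∑ B ∈ T, krawtchouk (Fintype.card ι) k (symmDiff A B).card =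
      ∑ U ∈ Finset.powersetCard k Finset.univ, (∑ A ∈ S, walsh U A) * ∑ B ∈ T, walsh U B := by
  simp only [← sum_walsh, walsh_symmDiff, Finset.sum_mul_sum]
  rw [Finset.sum_comm]
  refine (Finset.sum_congr rfl fun B _ => Finset.sum_comm).trans ?_
  rw [Finset.sum_comm]
  exact Finset.sum_congr rfl fun U _ => Finset.sum_comm

/-- The combination `∑ k ≤ n, f k * K_k` of Krawtchouk polynomials, evaluated at `d`. -/
def krawtchoukSum (n : ℕ) (f : ℕ → ℤ) (d : ℕ) : ℤ :=
  ∑ k ∈ Finset.range (n + 1), f k * krawtchouk n k d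

lemma sum_krawtchoukSum_symmDiff (C : Finset (Finset ι)) (f : ℕ → ℤ) :
    ∑ A ∈ C, ∑ B ∈ C, krawtchoukSum (Fintype.card ι) f (symmDiff A B).card =
      ∑ U : Finset ι, f U.card * (∑ A ∈ C, walsh U A) ^ 2 := by
  calc
    _ = ∑ k ∈ Finset.range (Fintype.card ι + 1), f k *
          ∑ A ∈ C, ∑ B ∈ C, krawtchouk (Fintype.card ι) k (symmDiff A B).card := by
      simp only [krawtchoukSum, Finset.mul_sum]
      rw [Finset.sum_comm]
      refine (Finset.sum_congr rfl fun B _ => Finset.sum_comm).trans ?_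
      rw [Finset.sum_comm]
      exact Finset.sum_congr rfl fun U _ => Finset.sum_comm
    _ = ∑ k ∈ Finset.range (Fintype.card ι + 1), ∑ U ∈ Finset.powersetCard k Finset.univ,
          f U.card * (∑ A ∈ C, walsh U A) ^ 2 := by
      refine Finset.sum_congr rfl fun k _ => ?_
      rw [sum_krawtchouk_symmDiff, Finset.mul_sum]
      refine Finset.sum_congr rfl fun U hU => ?_
      rw [(Finset.mem_powersetCard.mp hU).2, sq]
    _ = _ := by
      rw [← Finset.powerset_univ, Finset.sum_powerset]
      rfl

/-- Complementary slackness for Delsarte's linear programming bound. -/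
theorem delsarte_tight {C : Finset (Finset ι)} {f : ℕ → ℤ} (hf : ∀ k, 0 ≤ f k)
    (hg : ∀ A ∈ C, ∀ B ∈ C, A ≠ B → krawtchoukSum (Fintype.card ι) f (symmDiff A B).card ≤ 0)
    (htight : C.card * f 0 = krawtchoukSum (Fintype.card ι) f 0) :
    (∀ A ∈ C, ∀ B ∈ C, A ≠ B → krawtchoukSum (Fintype.card ι) f (symmDiff A B).card = 0) ∧
      ∀ U : Finset ι, U.Nonempty → 0 < f U.card → ∑ A ∈ C, walsh U A = 0 := by
  set g := krawtchoukSum (Fintype.card ι) f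
  have hdiag (A : Finset ι) (hA : A ∈ C) :
      ∑ B ∈ C, g (symmDiff A B).card = g 0 + ∑ B ∈ C.erase A, g (symmDiff A B).card := by
    rw [← Finset.add_sum_erase C _ hA]
    simp
  have hoff : ∀ A ∈ C, ∀ B ∈ C.erase A, g (symmDiff A B).card ≤ 0 := fun A hA B hB =>
    hg A hA B (Finset.mem_of_mem_erase hB) (Finset.ne_of_mem_erase hB).symm
  have hspec : ∀ U ∈ Finset.univ.erase (∅ : Finset ι), 0 ≤ f U.card * (∑ A ∈ C, walsh U A) ^ 2 :=
    fun U _ => mul_nonneg (hf _) (sq_nonneg _)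
  have hbalance : ∑ A ∈ C, ∑ B ∈ C.erase A, g (symmDiff A B).card =
      ∑ U ∈ Finset.univ.erase (∅ : Finset ι), f U.card * (∑ A ∈ C, walsh U A) ^ 2 := by
    have h := sum_krawtchoukSum_symmDiff C f
    rw [Finset.sum_congr rfl hdiag, Finset.sum_add_distrib, Finset.sum_const, nsmul_eq_mul,
      ← Finset.add_sum_erase _ _ (Finset.mem_univ (∅ : Finset ι)), ← htight] at h
    simp only [walsh, Finset.empty_inter, Finset.card_empty, pow_zero, Finset.sum_const,
      nsmul_eq_mul, mul_one] at h
    simp only [walsh]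
    linarith
  have hle : ∀ A ∈ C, ∑ B ∈ C.erase A, g (symmDiff A B).card ≤ 0 := fun A hA =>
    Finset.sum_nonpos (hoff A hA)
  have hzero : ∑ A ∈ C, ∑ B ∈ C.erase A, g (symmDiff A B).card = 0 :=
    le_antisymm (Finset.sum_nonpos hle) (hbalance ▸ Finset.sum_nonneg hspec)
  constructor
  · intro A hA B hB hAB
    have hrow := (Finset.sum_eq_zero_iff_of_nonpos hle).mp hzero A hA
    exact (Finset.sum_eq_zero_iff_of_nonpos (hoff A hA)).mp hrow B
      (Finset.mem_erase.mpr ⟨hAB.symm, hB⟩)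
  · intro U hU hfU
    have hterm := (Finset.sum_eq_zero_iff_of_nonneg hspec).mp (hbalance ▸ hzero) U
      (Finset.mem_erase.mpr ⟨hU.ne_empty, Finset.mem_univ U⟩)
    exact pow_eq_zero_iff two_ne_zero |>.mp ((mul_eq_zero.mp hterm).resolve_left hfU.ne')

end Characters

section Translation

variable {ι : Type*} [Fintype ι] [DecidableEq ι]

lemma card_symmDiff_compl (A B : Finset ι) :
    (symmDiff A Bᶜ).card = Fintype.card ι - (symmDiff A B).card := by
  rw [← Finset.card_compl]
  congr 1
  ext x
  simp only [Finset.mem_symmDiff, Finset.mem_compl]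
  tauto

/-- The certificate making Delsarte's bound tight for length `16` and distance `6`: the optimal
bound there is `256`, and optimal multipliers have been found by linear programming. -/
def certificate : ℕ → ℤ
  | 0 => 480
  | 1 => 480
  | 2 => 144
  | 3 => 89
  | 4 => 17
  | 12 => 7
  | 13 => 7
  | _ => 0

lemma certificate_nonneg (k : ℕ) : 0 ≤ certificate k := by
  unfold certificate
  split <;> norm_num

/-- A binary code of length `16` with `256` codewords and minimum distance at least `6`, each
codeword being represented by its support, a set of elements of the coordinate set `ι`. -/
structure IsNRCode (C : Finset (Finset ι)) : Prop where
  card_index : Fintype.card ι = 16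
  card_code : C.card = 256
  six_le_dist : ∀ A ∈ C, ∀ B ∈ C, A ≠ B → 6 ≤ (symmDiff A B).card

namespace IsNRCode

variable {C : Finset (Finset ι)} (hC : IsNRCode C)
include hC

lemma card_le (A : Finset ι) : A.card ≤ 16 := hC.card_index ▸ A.card_le_univ

lemma eq_of_dist_le {A B : Finset ι} (hA : A ∈ C) (hB : B ∈ C)
    (hAB : (symmDiff A B).card ≤ 5) : A = B := by
  by_contra hne
  have := hC.six_le_dist A hA B hB hne
  omega

lemma translate (X : Finset ι) : IsNRCode (C.image (symmDiff X)) where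
  card_index := hC.card_index
  card_code := by rw [Finset.card_image_of_injective _ (symmDiff_right_injective X), hC.card_code]
  six_le_dist := by
    simp only [Finset.forall_mem_image]
    intro A hA B hB hne
    rw [symmDiff_symmDiff_symmDiff_comm, symmDiff_self, bot_symmDiff]
    exact hC.six_le_dist A hA B hB fun h => hne (h ▸ rfl)

lemma certificate_tight :
    (∀ A ∈ C, ∀ B ∈ C, A ≠ B → krawtchoukSum 16 certificate (symmDiff A B).card = 0) ∧
      ∀ U : Finset ι, U.Nonempty → 0 < certificate U.card → ∑ A ∈ C, walsh U A = 0 := by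
  have hneg : ∀ d ∈ Finset.Icc 6 16, krawtchoukSum 16 certificate d ≤ 0 := by decide +kernel
  rw [← hC.card_index]
  refine delsarte_tight certificate_nonneg (fun A hA B hB hAB => ?_) ?_
  · rw [hC.card_index]
    exact hneg _ (Finset.mem_Icc.mpr ⟨hC.six_le_dist A hA B hB hAB, hC.card_le _⟩)
  · rw [hC.card_index, hC.card_code]
    decide +kernel

lemma dist_cases {A B : Finset ι} (hA : A ∈ C) (hB : B ∈ C) (hAB : A ≠ B) :
    (symmDiff A B).card = 6 ∨ (symmDiff A B).card = 8 ∨ (symmDiff A B).card = 10 ∨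
      (symmDiff A B).card = 16 := by
  have hroots : ∀ d ∈ Finset.Icc 6 16, krawtchoukSum 16 certificate d = 0 →
      d = 6 ∨ d = 8 ∨ d = 10 ∨ d = 16 := by decide +kernel
  exact hroots _ (Finset.mem_Icc.mpr ⟨hC.six_le_dist A hA B hB hAB, hC.card_le _⟩)
    (hC.certificate_tight.1 A hA B hB hAB)

lemma card_cases (h0 : ∅ ∈ C) {A : Finset ι} (hA : A ∈ C) :
    A.card = 0 ∨ A.card = 6 ∨ A.card = 8 ∨ A.card = 10 ∨ A.card = 16 := by
  rcases A.eq_empty_or_nonempty with rfl | hne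
  · simp
  · rw [← bot_symmDiff A]
    exact Or.inr (hC.dist_cases h0 hA hne.ne_empty.symm)

lemma even_card (h0 : ∅ ∈ C) {A : Finset ι} (hA : A ∈ C) : Even A.card := by
  rcases hC.card_cases h0 hA with h | h | h | h | h <;> rw [h] <;> decide

/-- The dual distance of the code is at least `5`. -/
lemma sum_krawtchouk_eq_zero {k : ℕ} (hk : k ∈ Finset.Icc 1 4) (X : Finset ι) :
    ∑ A ∈ C, krawtchouk 16 k (symmDiff X A).card = 0 := by
  have hpos : ∀ k ∈ Finset.Icc 1 4, 0 < certificate k := by decide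
  have h := sum_krawtchouk_symmDiff {X} C k
  rw [hC.card_index, Finset.sum_singleton] at h
  rw [h]
  refine Finset.sum_eq_zero fun U hU => ?_
  have hUk := (Finset.mem_powersetCard.mp hU).2
  have hU0 : U.Nonempty := Finset.card_pos.mp (by rw [hUk]; exact (Finset.mem_Icc.mp hk).1)
  rw [hC.certificate_tight.2 U hU0 (hUk ▸ hpos k hk), mul_zero]

lemma compl_mem {A : Finset ι} (hA : A ∈ C) : Aᶜ ∈ C := by
  -- `K₃ + 5 K₁ = (t³ - 16 t) / 6` with `t = 16 - 2 d` vanishes at the distances `6`, `8` and `10`.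
  have hsum : ∑ B ∈ C, (krawtchouk 16 3 (symmDiff A B).card +
      5 * krawtchouk 16 1 (symmDiff A B).card) = 0 := by
    rw [Finset.sum_add_distrib, ← Finset.mul_sum, hC.sum_krawtchouk_eq_zero (by decide),
      hC.sum_krawtchouk_eq_zero (by decide), mul_zero, add_zero]
  obtain ⟨B, hB, hneg⟩ : ∃ B ∈ C, krawtchouk 16 3 (symmDiff A B).card +
      5 * krawtchouk 16 1 (symmDiff A B).card < 0 := by
    by_contra! hnonneg
    refine (Finset.sum_pos' hnonneg ⟨A, hA, ?_⟩).ne' hsum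
    rw [symmDiff_self, Finset.bot_eq_empty, Finset.card_empty]
    decide
  have hdist : (symmDiff A B).card = 16 := by
    have hne : A ≠ B := by
      rintro rfl
      rw [symmDiff_self, Finset.bot_eq_empty, Finset.card_empty] at hneg
      exact absurd hneg (by decide)
    rcases hC.dist_cases hA hB hne with h | h | h | h
    on_goal 4 => exact h
    all_goals
      rw [h] at hneg
      exact absurd hneg (by decide)
  have huniv : symmDiff A B = Finset.univ := by
    rw [← Finset.card_eq_iff_eq_univ, hdist, hC.card_index]
  have hBA : B = Aᶜ := by
    rw [← symmDiff_symmDiff_cancel_left A B, huniv]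
    ext x
    simp [Finset.mem_symmDiff]
  exact hBA ▸ hB

end IsNRCode

/-- The number of codewords of `C` at distance `d` from `X`. -/
def distCount (C : Finset (Finset ι)) (X : Finset ι) (d : ℕ) : ℕ :=
  (C.filter fun A => (symmDiff X A).card = d).card

namespace IsNRCode

variable {C : Finset (Finset ι)} (hC : IsNRCode C)
include hC

lemma distCount_sub (X : Finset ι) {d : ℕ} (hd : d ≤ 16) :
    distCount C X (16 - d) = distCount C X d := by
  refine Finset.card_bij' (fun A _ => Aᶜ) (fun A _ => Aᶜ) ?_ ?_ (fun A _ => compl_compl A)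
    fun A _ => compl_compl A
  all_goals
    intro A hA
    obtain ⟨hA, hd'⟩ := Finset.mem_filter.mp hA
    have hcard := card_symmDiff_compl X A
    rw [hC.card_index] at hcard
    exact Finset.mem_filter.mpr ⟨hC.compl_mem hA, by omega⟩

lemma distCount_odd (h0 : ∅ ∈ C) {X : Finset ι} (hX : Odd X.card) :
    5 * distCount C X 1 + distCount C X 3 = 5 := by
  have hpoint : ∀ d ∈ Finset.range 17, Odd d → krawtchouk 16 4 d + 4 * krawtchouk 16 2 d + 10 =
      256 * (5 * (if d = 1 then 1 else 0) + (if d = 3 then 1 else 0) +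
        (if d = 16 - 3 then 1 else 0) + 5 * (if d = 16 - 1 then 1 else 0)) := by decide +kernel
  have hsum : ∑ A ∈ C, (krawtchouk 16 4 (symmDiff X A).card +
      4 * krawtchouk 16 2 (symmDiff X A).card + 10) = 2560 := by
    rw [Finset.sum_add_distrib, Finset.sum_add_distrib, ← Finset.mul_sum,
      hC.sum_krawtchouk_eq_zero (by decide), hC.sum_krawtchouk_eq_zero (by decide),
      Finset.sum_const, hC.card_code]
    norm_num
  rw [Finset.sum_congr rfl fun A hA => hpoint _ (Finset.mem_range_succ_iff.mpr (hC.card_le _))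
    (by rwa [← Nat.not_even_iff_odd, even_card_symmDiff_iff (hC.even_card h0 hA),
      Nat.not_even_iff_odd])] at hsum
  simp only [← Finset.mul_sum, Finset.sum_add_distrib, Finset.sum_boole] at hsum
  have h3 := hC.distCount_sub X (d := 3) (by norm_num)
  have h1 := hC.distCount_sub X (d := 1) (by norm_num)
  simp only [distCount] at h1 h3 ⊢
  push_cast [h1, h3] at hsum
  omega

lemma distCount_even (h0 : ∅ ∈ C) {X : Finset ι} (hX : Even X.card) :
    20 * distCount C X 0 + 6 * distCount C X 2 + distCount C X 4 = 20 := by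
  have hpoint : ∀ d ∈ Finset.range 17, Even d → krawtchouk 16 4 d + 6 * krawtchouk 16 2 d + 20 =
      128 * (20 * (if d = 0 then 1 else 0) + 6 * (if d = 2 then 1 else 0) +
        (if d = 4 then 1 else 0) + (if d = 16 - 4 then 1 else 0) +
        6 * (if d = 16 - 2 then 1 else 0) + 20 * (if d = 16 - 0 then 1 else 0)) := by
    decide +kernel
  have hsum : ∑ A ∈ C, (krawtchouk 16 4 (symmDiff X A).card +
      6 * krawtchouk 16 2 (symmDiff X A).card + 20) = 5120 := by
    rw [Finset.sum_add_distrib, Finset.sum_add_distrib, ← Finset.mul_sum,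
      hC.sum_krawtchouk_eq_zero (by decide), hC.sum_krawtchouk_eq_zero (by decide),
      Finset.sum_const, hC.card_code]
    norm_num
  rw [Finset.sum_congr rfl fun A hA => hpoint _ (Finset.mem_range_succ_iff.mpr (hC.card_le _))
    ((even_card_symmDiff_iff (hC.even_card h0 hA)).mpr hX)] at hsum
  simp only [← Finset.mul_sum, Finset.sum_add_distrib, Finset.sum_boole] at hsum
  have h0 := hC.distCount_sub X (d := 0) (by norm_num)
  have h2 := hC.distCount_sub X (d := 2) (by norm_num)
  have h4 := hC.distCount_sub X (d := 4) (by norm_num)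
  simp only [distCount] at h0 h2 h4 ⊢
  push_cast [h0, h2, h4] at hsum
  omega

end IsNRCode
end Translation

section Blocks

variable {ι : Type*} [DecidableEq ι]

/-- The codewords of weight `k` containing `Q`; they are called hexads for `k = 6` and octads for
`k = 8`. -/
def blocks (C : Finset (Finset ι)) (k : ℕ) (Q : Finset ι) : Finset (Finset ι) :=
  C.filter fun A => A.card = k ∧ Q ⊆ A

lemma mem_blocks {C : Finset (Finset ι)} {k : ℕ} {Q A : Finset ι} :
    A ∈ blocks C k Q ↔ A ∈ C ∧ A.card = k ∧ Q ⊆ A := Finset.mem_filter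

/-- `X` has distance at least `4`, the covering radius of a Nordstrom-Robinson code, from `C`. -/
def IsDeep (C : Finset (Finset ι)) (X : Finset ι) : Prop :=
  ∀ A ∈ C, 4 ≤ (symmDiff X A).card

lemma subset_iff_card_inter_eq {X A : Finset ι} : X ⊆ A ↔ (X ∩ A).card = X.card :=
  ⟨fun h => by rw [Finset.inter_eq_left.mpr h], fun h =>
    Finset.inter_eq_left.mp (Finset.eq_of_subset_of_card_le Finset.inter_subset_left h.ge)⟩

lemma card_filter_erase_subset (Q A : Finset ι) :
    (Q.filter fun q => Q.erase q ⊆ A).card =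
      if (Q ∩ A).card = Q.card then Q.card else if (Q ∩ A).card + 1 = Q.card then 1 else 0 := by
  have hcard := Finset.card_sdiff_add_card_inter Q A
  have herase : (Q.filter fun q => Q.erase q ⊆ A) = Q.filter fun q => Q \ A ⊆ {q} :=
    Finset.filter_congr fun q _ => by
      rw [← Finset.subset_insert_iff, Finset.insert_eq, Finset.union_comm]
      exact sdiff_le_iff.symm
  rw [herase]
  split_ifs with hall hone
  · rw [Finset.card_eq_zero.mp (by omega : (Q \ A).card = 0)]
    simp
  · obtain ⟨x, hx⟩ := Finset.card_eq_one.mp (by omega : (Q \ A).card = 1)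
    have hxQ : x ∈ Q := Finset.sdiff_subset (hx ▸ Finset.mem_singleton_self x)
    rw [hx, Finset.card_eq_one]
    exact ⟨x, by grind⟩
  · rw [Finset.card_eq_zero, Finset.filter_eq_empty_iff]
    intro q _ hq
    have := Finset.card_le_card hq
    rw [Finset.card_singleton] at this
    omega

variable [Fintype ι]

namespace IsNRCode

variable {C : Finset (Finset ι)} (hC : IsNRCode C) (h0 : ∅ ∈ C)
include hC

lemma card_inter_le {A B : Finset ι} (hA : A ∈ C) (hB : B ∈ C) (hAB : A ≠ B) :
    2 * (A ∩ B).card + 6 ≤ A.card + B.card := by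
  have := card_symmDiff_add_two_mul_card_inter A B
  have := hC.six_le_dist A hA B hB hAB
  omega

lemma pairwiseDisjoint_hexads_sdiff {T : Finset ι} (hT : T.card = 3) :
    ((blocks C 6 T : Finset (Finset ι)) : Set (Finset ι)).PairwiseDisjoint (· \ T) := by
  intro H hH H' hH' hne
  obtain ⟨hHC, hH6, hTH⟩ := mem_blocks.mp hH
  obtain ⟨hHC', hH6', hTH'⟩ := mem_blocks.mp hH'
  have hinter : T = H ∩ H' := by
    have := hC.card_inter_le hHC hHC' hne
    exact Finset.eq_of_subset_of_card_le (Finset.subset_inter hTH hTH') (by omega)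
  refine Finset.disjoint_left.mpr fun x hx hx' => (Finset.mem_sdiff.mp hx).2 ?_
  exact hinter ▸ Finset.mem_inter.mpr ⟨(Finset.mem_sdiff.mp hx).1, (Finset.mem_sdiff.mp hx').1⟩

include h0

lemma card_symmDiff_eq_three_iff {T A : Finset ι} (hT : T.card = 3) (hA : A ∈ C) :
    (symmDiff T A).card = 3 ↔ A = ∅ ∨ A ∈ blocks C 6 T := by
  have hcard := card_symmDiff_add_two_mul_card_inter T A
  have hle : (T ∩ A).card ≤ T.card := Finset.card_le_card Finset.inter_subset_left
  have hle' : (T ∩ A).card ≤ A.card := Finset.card_le_card Finset.inter_subset_right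
  rw [mem_blocks, subset_iff_card_inter_eq, ← Finset.card_eq_zero]
  have := hC.card_cases h0 hA
  simp only [hA, true_and]
  omega

lemma card_hexads_of_card_eq_three {T : Finset ι} (hT : T.card = 3) :
    (blocks C 6 T).card = 4 := by
  have hodd := hC.distCount_odd h0 (X := T) (hT ▸ by decide)
  have h1 : distCount C T 1 = 0 := by
    refine Finset.card_eq_zero.mpr (Finset.filter_eq_empty_iff.mpr fun A hA => ?_)
    have hcard := card_symmDiff_add_two_mul_card_inter T A
    have hle : (T ∩ A).card ≤ T.card := Finset.card_le_card Finset.inter_subset_left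
    have hle' : (T ∩ A).card ≤ A.card := Finset.card_le_card Finset.inter_subset_right
    have := hC.card_cases h0 hA
    omega
  have h3 : C.filter (fun A => (symmDiff T A).card = 3) = insert ∅ (blocks C 6 T) := by
    ext A
    rw [Finset.mem_filter, Finset.mem_insert]
    constructor
    · exact fun h => (hC.card_symmDiff_eq_three_iff h0 hT h.1).mp h.2
    · intro h
      have hA : A ∈ C := h.elim (fun h => h ▸ h0) fun h => (mem_blocks.mp h).1
      exact ⟨hA, (hC.card_symmDiff_eq_three_iff h0 hT hA).mpr h⟩
  have hnot : ∅ ∉ blocks C 6 T := fun h => by simpa using (mem_blocks.mp h).2.1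
  rw [h1, distCount, h3, Finset.card_insert_of_notMem hnot] at hodd
  omega

lemma isDeep_iff_blocks_eq_empty {Q : Finset ι} (hQ : Q.card = 4) :
    IsDeep C Q ↔ blocks C 6 Q = ∅ := by
  rw [blocks, Finset.filter_eq_empty_iff]
  refine forall₂_congr fun A hA => ?_
  have hcard := card_symmDiff_add_two_mul_card_inter Q A
  have hle : (Q ∩ A).card ≤ Q.card := Finset.card_le_card Finset.inter_subset_left
  have hle' : (Q ∩ A).card ≤ A.card := Finset.card_le_card Finset.inter_subset_right
  rw [subset_iff_card_inter_eq]
  have := hC.card_cases h0 hA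
  omega

/-- The four hexads through a triple cover all of the remaining thirteen points but one. -/
lemma existsUnique_isDeep_insert {T : Finset ι} (hT : T.card = 3) :
    ∃! l, l ∉ T ∧ IsDeep C (insert l T) := by
  have hcover : ((blocks C 6 T).biUnion (· \ T)).card = 12 := by
    rw [Finset.card_biUnion (hC.pairwiseDisjoint_hexads_sdiff hT), Finset.sum_congr rfl fun H hH =>
      (Finset.card_sdiff_of_subset (mem_blocks.mp hH).2.2).trans
        (by rw [(mem_blocks.mp hH).2.1, hT]), Finset.sum_const,
      hC.card_hexads_of_card_eq_three h0 hT]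
    rfl
  have hsub : (blocks C 6 T).biUnion (· \ T) ⊆ Tᶜ := by
    refine Finset.biUnion_subset.mpr fun H _ => ?_
    exact (Finset.subset_univ H |> Finset.sdiff_subset_sdiff) subset_rfl
  have hone : (Tᶜ \ (blocks C 6 T).biUnion (· \ T)).card = 1 := by
    rw [Finset.card_sdiff_of_subset hsub, Finset.card_compl, hC.card_index, hcover, hT]
  have hdeep (l : ι) : l ∈ Tᶜ \ (blocks C 6 T).biUnion (· \ T) ↔
      l ∉ T ∧ IsDeep C (insert l T) := by
    rw [Finset.mem_sdiff, Finset.mem_compl]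
    refine and_congr_right fun hl => ?_
    rw [hC.isDeep_iff_blocks_eq_empty h0 (by rw [Finset.card_insert_of_notMem hl, hT]),
      Finset.eq_empty_iff_forall_notMem]
    simp only [Finset.mem_biUnion, Finset.mem_sdiff, mem_blocks, Finset.insert_subset_iff]
    grind
  obtain ⟨l, hl⟩ := Finset.card_eq_one.mp hone
  simp only [← hdeep, hl, Finset.mem_singleton]
  exact ⟨l, rfl, fun _ h => h⟩

lemma sum_card_hexads_erase {Q : Finset ι} (hQ : Q.card = 4) :
    ∑ q ∈ Q, (blocks C 6 (Q.erase q)).card = 16 := by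
  rw [Finset.sum_congr rfl fun q hq => hC.card_hexads_of_card_eq_three h0
    (T := Q.erase q) (by rw [Finset.card_erase_of_mem hq, hQ]), Finset.sum_const, hQ]
  rfl

/-- Counting the codewords at distance at most `4` from a quadruple by their weight. -/
lemma card_octads_add_two_mul_card_hexads {Q : Finset ι} (hQ : Q.card = 4) :
    (blocks C 8 Q).card + 2 * (blocks C 6 Q).card = 3 := by
  have hpoint : ∀ A ∈ C, (20 * (if (symmDiff Q A).card = 0 then 1 else 0) +
      6 * (if (symmDiff Q A).card = 2 then 1 else 0) +
      if (symmDiff Q A).card = 4 then 1 else 0) =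
      (if A.card = 8 ∧ Q ⊆ A then 1 else 0) + 2 * (if A.card = 6 ∧ Q ⊆ A then 1 else 0) +
      (∑ q ∈ Q, if A.card = 6 ∧ Q.erase q ⊆ A then 1 else 0) + if ∅ = A then 1 else 0 := by
    intro A hA
    have hcard := card_symmDiff_add_two_mul_card_inter Q A
    have hle : (Q ∩ A).card ≤ Q.card := Finset.card_le_card Finset.inter_subset_left
    have hle' : (Q ∩ A).card ≤ A.card := Finset.card_le_card Finset.inter_subset_right
    simp only [ite_and, Finset.sum_ite_irrel, Finset.sum_const_zero, ← Finset.card_filter,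
      card_filter_erase_subset, subset_iff_card_inter_eq (X := Q), eq_comm (a := ∅),
      ← Finset.card_eq_zero]
    have hdist : (symmDiff Q A).card = 4 + A.card - 2 * (Q ∩ A).card := by omega
    rw [hdist, hQ]
    rw [hQ] at hle
    generalize (Q ∩ A).card = j at hle hle'
    obtain h | h | h | h | h := hC.card_cases h0 hA
    all_goals
      rw [h] at hle' ⊢
      interval_cases j <;> rfl
  have hsum := Finset.sum_congr rfl hpoint
  simp only [Finset.sum_add_distrib, ← Finset.mul_sum] at hsum
  rw [Finset.sum_comm (s := C) (t := Q)] at hsum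
  simp only [← Finset.card_filter, Finset.sum_ite_eq, if_pos h0] at hsum
  have heven := hC.distCount_even h0 (X := Q) (hQ ▸ by decide)
  have herase := hC.sum_card_hexads_erase h0 hQ
  simp only [distCount, blocks] at heven herase ⊢
  omega

lemma card_octads_eq_one_of_not_isDeep {Q : Finset ι} (hQ : Q.card = 4) (hdeep : ¬ IsDeep C Q) :
    (blocks C 8 Q).card = 1 := by
  have hcount := hC.card_octads_add_two_mul_card_hexads h0 hQ
  rw [hC.isDeep_iff_blocks_eq_empty h0 hQ, ← Finset.card_eq_zero] at hdeep
  omega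

lemma card_octads_eq_three_of_isDeep {Q : Finset ι} (hQ : Q.card = 4) (hdeep : IsDeep C Q) :
    (blocks C 8 Q).card = 3 := by
  have hcount := hC.card_octads_add_two_mul_card_hexads h0 hQ
  rw [hC.isDeep_iff_blocks_eq_empty h0 hQ, ← Finset.card_eq_zero] at hdeep
  omega

lemma octad_eq_of_not_isDeep {Q O P : Finset ι} (hQ : Q.card = 4) (hdeep : ¬ IsDeep C Q)
    (hO : O ∈ blocks C 8 Q) (hP : P ∈ blocks C 8 Q) : O = P :=
  Finset.card_le_one.mp (hC.card_octads_eq_one_of_not_isDeep h0 hQ hdeep).le O hO P hP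

lemma not_isDeep_insert {T : Finset ι} (hT : T.card = 3) {l m : ι} (hl : l ∉ T)
    (hdeep : IsDeep C (insert l T)) (hm : m ∉ insert l T) : ¬ IsDeep C (insert m T) := fun hdeep' =>
  hm <| Finset.mem_insert.mpr <| Or.inl <| (hC.existsUnique_isDeep_insert h0 hT).unique
    ⟨fun h => hm (Finset.mem_insert_of_mem h), hdeep'⟩ ⟨hl, hdeep⟩

/-- The three octads through a deep quadruple cover all of the remaining twelve points. -/
lemma exists_octad_of_isDeep_insert {T : Finset ι} (hT : T.card = 3) {l : ι} (hl : l ∉ T)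
    (hdeep : IsDeep C (insert l T)) {m : ι} (hm : m ∉ insert l T) :
    ∃ P ∈ blocks C 8 (insert l T), m ∈ P := by
  set Q := insert l T with hQ
  have hQ4 : Q.card = 4 := by rw [hQ, Finset.card_insert_of_notMem hl, hT]
  have hdisj : ((blocks C 8 Q : Finset (Finset ι)) : Set (Finset ι)).PairwiseDisjoint (· \ Q) := by
    intro O hO P hP hne
    refine Finset.disjoint_left.mpr fun x hxO hxP => hne ?_
    obtain ⟨hOC, hO8, hQO⟩ := mem_blocks.mp hO
    obtain ⟨hPC, hP8, hQP⟩ := mem_blocks.mp hP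
    rw [Finset.mem_sdiff] at hxO hxP
    have hxT : x ∉ T := fun h => hxO.2 (Finset.mem_insert_of_mem h)
    refine hC.octad_eq_of_not_isDeep h0 (by rw [Finset.card_insert_of_notMem hxT, hT])
      (hC.not_isDeep_insert h0 hT hl hdeep hxO.2) (mem_blocks.mpr ⟨hOC, hO8, ?_⟩)
      (mem_blocks.mpr ⟨hPC, hP8, ?_⟩)
    · exact Finset.insert_subset hxO.1 ((Finset.subset_insert l T).trans hQO)
    · exact Finset.insert_subset hxP.1 ((Finset.subset_insert l T).trans hQP)
  have hcover : ((blocks C 8 Q).biUnion (· \ Q)).card = 12 := by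
    rw [Finset.card_biUnion hdisj, Finset.sum_congr rfl fun P hP =>
      (Finset.card_sdiff_of_subset (mem_blocks.mp hP).2.2).trans
        (by rw [(mem_blocks.mp hP).2.1, hQ4]), Finset.sum_const,
      hC.card_octads_eq_three_of_isDeep h0 hQ4 hdeep]
    rfl
  have hsub : (blocks C 8 Q).biUnion (· \ Q) ⊆ Qᶜ :=
    Finset.biUnion_subset.mpr fun P _ => Finset.sdiff_subset_sdiff P.subset_univ subset_rfl
  have heq := Finset.eq_of_subset_of_card_le hsub
    (by rw [hcover, Finset.card_compl, hC.card_index, hQ4])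
  obtain ⟨P, hP, hmP⟩ := Finset.mem_biUnion.mp (heq ▸ Finset.mem_compl.mpr hm)
  exact ⟨P, hP, (Finset.mem_sdiff.mp hmP).1⟩

lemma mem_octad_of_isDeep_insert {T O : Finset ι} (hT : T.card = 3) (hO : O ∈ blocks C 8 T)
    {l : ι} (hl : l ∉ T) (hdeep : IsDeep C (insert l T)) : l ∈ O := by
  obtain ⟨hOC, hO8, hTO⟩ := mem_blocks.mp hO
  by_contra hlO
  obtain ⟨m, hmO, hmT⟩ := Finset.exists_mem_notMem_of_card_lt_card (s := T) (t := O) (by omega)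
  have hmQ : m ∉ insert l T := by
    rw [Finset.mem_insert, not_or]
    exact ⟨fun h => hlO (h ▸ hmO), hmT⟩
  obtain ⟨P, hP, hmP⟩ := hC.exists_octad_of_isDeep_insert h0 hT hl hdeep hmQ
  obtain ⟨hPC, hP8, hQP⟩ := mem_blocks.mp hP
  have hOP : O = P := hC.octad_eq_of_not_isDeep h0 (by rw [Finset.card_insert_of_notMem hmT, hT])
    (hC.not_isDeep_insert h0 hT hl hdeep hmQ)
    (mem_blocks.mpr ⟨hOC, hO8, Finset.insert_subset hmO hTO⟩)
    (mem_blocks.mpr ⟨hPC, hP8, Finset.insert_subset hmP ((Finset.subset_insert l T).trans hQP)⟩)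
  exact hlO (hOP ▸ hQP (Finset.mem_insert_self l T))

lemma card_inter_octad_ne_three {O Q : Finset ι} (hO : O ∈ C) (hO8 : O.card = 8)
    (hQ : Q.card = 4) (hdeep : IsDeep C Q) : (Q ∩ O).card ≠ 3 := by
  intro h3
  obtain ⟨l, hl⟩ := Finset.card_eq_one.mp (show (Q \ O).card = 1 by
    have := Finset.card_sdiff_add_card_inter Q O
    omega)
  have hlQO : l ∈ Q \ O := hl ▸ Finset.mem_singleton_self l
  have hQins : insert l (Q ∩ O) = Q := by
    rw [Finset.insert_eq, ← hl, Finset.sdiff_union_inter]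
  exact (Finset.mem_sdiff.mp hlQO).2 <| hC.mem_octad_of_isDeep_insert h0 h3
    (mem_blocks.mpr ⟨hO, hO8, Finset.inter_subset_right⟩)
    (fun h => (Finset.mem_sdiff.mp hlQO).2 (Finset.mem_inter.mp h).2) (hQins.symm ▸ hdeep)

lemma even_card_inter_octad {O Q : Finset ι} (hO : O ∈ C) (hO8 : O.card = 8)
    (hQ : Q.card = 4) (hdeep : IsDeep C Q) : Even (Q ∩ O).card := by
  have h3 := hC.card_inter_octad_ne_three h0 hO hO8 hQ hdeep
  have h3' := hC.card_inter_octad_ne_three h0 (hC.compl_mem hO)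
    (by rw [Finset.card_compl, hC.card_index, hO8]) hQ hdeep
  rw [← Finset.sdiff_eq_inter_compl] at h3'
  have := Finset.card_sdiff_add_card_inter Q O
  rw [Nat.even_iff]
  omega

lemma exists_dist_le_four (X : Finset ι) : ∃ A ∈ C, (symmDiff X A).card ≤ 4 := by
  by_contra! hfar
  have hzero {d : ℕ} (hd : d ≤ 4) : distCount C X d = 0 :=
    Finset.card_eq_zero.mpr <| Finset.filter_eq_empty_iff.mpr fun A hA h =>
      absurd (hfar A hA) (by omega)
  rcases Nat.even_or_odd X.card with hX | hX
  · have := hC.distCount_even h0 hX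
    simp [hzero] at this
  · have := hC.distCount_odd h0 hX
    simp [hzero] at this

end IsNRCode
end Blocks

/-- The affine space of dimension four over the field with two elements; the coordinates of a
Nordstrom-Robinson code will be identified with its points. -/
abbrev Point : Type := Fin 4 → ZMod 2

section Labelling

variable {ι : Type*} [Fintype ι] [DecidableEq ι]

namespace IsNRCode

variable {C : Finset (Finset ι)} (hC : IsNRCode C) (h0 : ∅ ∈ C)
include hC h0

lemma exists_frame {p x y : ι} (hpx : p ≠ x) (hpy : p ≠ y) (hxy : x ≠ y) :
    ∃ q : Fin 4 → ι, q.Injective ∧ q 0 = x ∧ q 1 = y ∧ (∀ i, q i ≠ p) ∧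
      (blocks C 6 (insert p (Finset.univ.image q))).Nonempty := by
  have hcard : ({p, x, y} : Finset ι).card = 3 := Finset.card_eq_three.mpr
    ⟨p, x, y, hpx, hpy, hxy, rfl⟩
  obtain ⟨H, hH⟩ : (blocks C 6 {p, x, y}).Nonempty := Finset.card_pos.mp <| by
    rw [hC.card_hexads_of_card_eq_three h0 hcard]
    norm_num
  obtain ⟨hHC, hH6, hsub⟩ := mem_blocks.mp hH
  obtain ⟨z, hz, w, hw, hzw⟩ := Finset.one_lt_card.mp (show 1 < (H \ {p, x, y}).card by
    rw [Finset.card_sdiff_of_subset hsub, hH6, hcard]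
    norm_num)
  simp only [Finset.mem_sdiff, Finset.mem_insert, Finset.mem_singleton, not_or] at hz hw
  refine ⟨![x, y, z, w], ?_, rfl, rfl, ?_, H, mem_blocks.mpr ⟨hHC, hH6, ?_⟩⟩
  · intro i j hij
    fin_cases i <;> fin_cases j <;> simp_all
  · intro i
    fin_cases i <;> simp <;> grind
  · have hx : x ∈ H := hsub (by simp)
    have hy : y ∈ H := hsub (by simp)
    refine Finset.insert_subset (hsub (by simp)) (Finset.image_subset_iff.mpr fun i _ => ?_)
    fin_cases i
    exacts [hx, hy, hz.1, hw.1]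

/-- The octad through all of the frame but one point misses that point. -/
lemma exists_octad_frame {p : ι} {q : Fin 4 → ι} (hq : q.Injective) (hp : ∀ i, q i ≠ p)
    (hH : (blocks C 6 (insert p (Finset.univ.image q))).Nonempty) (i : Fin 4) :
    ∃ O ∈ C, O.card = 8 ∧ p ∈ O ∧ ∀ j, q j ∈ O ↔ j ≠ i := by
  obtain ⟨H, hH⟩ := hH
  obtain ⟨hHC, hH6, hsub⟩ := mem_blocks.mp hH
  set F := insert p (Finset.univ.image q) with hF
  have hpF : p ∉ Finset.univ.image q := by simpa using hp
  have hF5 : F.card = 5 := by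
    rw [hF, Finset.card_insert_of_notMem hpF, Finset.card_image_of_injective _ hq,
      Finset.card_univ, Fintype.card_fin]
  have hqF (j : Fin 4) : q j ∈ F :=
    Finset.mem_insert_of_mem (Finset.mem_image_of_mem q (Finset.mem_univ j))
  have hQ : (F.erase (q i)).card = 4 := by rw [Finset.card_erase_of_mem (hqF i), hF5]
  have hdeep : ¬ IsDeep C (F.erase (q i)) := by
    rw [hC.isDeep_iff_blocks_eq_empty h0 hQ]
    exact Finset.ne_empty_of_mem (mem_blocks.mpr ⟨hHC, hH6, (Finset.erase_subset _ _).trans hsub⟩)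
  obtain ⟨O, hO⟩ := Finset.card_pos.mp
    (hC.card_octads_eq_one_of_not_isDeep h0 hQ hdeep ▸ Nat.one_pos)
  obtain ⟨hOC, hO8, hQO⟩ := mem_blocks.mp hO
  refine ⟨O, hOC, hO8, hQO (Finset.mem_erase.mpr ⟨(hp i).symm, Finset.mem_insert_self _ _⟩),
    fun j => ⟨?_, fun hj => hQO (Finset.mem_erase.mpr ⟨hq.ne hj, hqF j⟩)⟩⟩
  rintro hjO rfl
  have hFO : F ⊆ O := (Finset.insert_erase (hqF j)) ▸ Finset.insert_subset hjO hQO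
  have hle := Finset.card_le_card (Finset.subset_inter hsub hFO)
  have := hC.card_inter_le hHC hOC (by rintro rfl; omega)
  omega

lemma surjective_of_sum_eq_zero_of_isDeep {f : ι → Point} {p : ι} {q : Fin 4 → ι} (hp : f p = 0)
    (hq : ∀ i, f (q i) = Pi.single i 1)
    (hf : ∀ Q, Q.card = 4 → IsDeep C Q → ∑ x ∈ Q, f x = 0) : f.Surjective := by
  have hadd : ∀ x y, ∃ z, f z = f x + f y := by
    intro x y
    by_cases hpx : p = x
    · exact ⟨y, by rw [← hpx, hp, zero_add]⟩
    by_cases hpy : p = y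
    · exact ⟨x, by rw [← hpy, hp, add_zero]⟩
    by_cases hxy : x = y
    · exact ⟨p, by rw [hp, hxy, CharTwo.add_self_eq_zero]⟩
    have hT : ({p, x, y} : Finset ι).card = 3 := Finset.card_eq_three.mpr
      ⟨p, x, y, hpx, hpy, hxy, rfl⟩
    obtain ⟨z, ⟨hz, hdeep⟩, -⟩ := hC.existsUnique_isDeep_insert h0 hT
    have hsum := hf _ (by rw [Finset.card_insert_of_notMem hz, hT]) hdeep
    rw [Finset.sum_insert hz, Finset.sum_insert (by simp [hpx, hpy]), hp, zero_add,
      Finset.sum_pair hxy] at hsum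
    exact ⟨z, CharTwo.add_eq_zero.mp hsum⟩
  let R : AddSubmonoid Point :=
    { carrier := Set.range f
      zero_mem' := ⟨p, hp⟩
      add_mem' := by
        rintro _ _ ⟨x, rfl⟩ ⟨y, rfl⟩
        exact hadd x y }
  intro v
  have hsingle (i : Fin 4) : Pi.single i (v i) ∈ R := by
    obtain h | h : v i = 0 ∨ v i = 1 := by generalize v i = a; revert a; decide
    · rw [h, Pi.single_zero]
      exact R.zero_mem
    · exact h ▸ ⟨q i, hq i⟩
  rw [← Finset.univ_sum_single v]
  exact R.sum_mem fun i _ => hsingle i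

lemma isDeep_of_sum_eq_zero {f : ι → Point} (hf : f.Injective)
    (hdeep : ∀ Q, Q.card = 4 → IsDeep C Q → ∑ x ∈ Q, f x = 0) {Q : Finset ι} (hQ : Q.card = 4)
    (hsum : ∑ x ∈ Q, f x = 0) : IsDeep C Q := by
  obtain ⟨q, hq⟩ : Q.Nonempty := Finset.card_pos.mp (by omega)
  have hT : (Q.erase q).card = 3 := by rw [Finset.card_erase_of_mem hq, hQ]
  obtain ⟨l, ⟨hl, hdeepl⟩, -⟩ := hC.existsUnique_isDeep_insert h0 hT
  have hsuml := hdeep _ (by rw [Finset.card_insert_of_notMem hl, hT]) hdeepl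
  rw [Finset.sum_insert hl] at hsuml
  rw [← Finset.add_sum_erase Q f hq] at hsum
  have hlq : l = q := hf (add_right_cancel (hsuml.trans hsum.symm))
  rwa [hlq, Finset.insert_erase hq] at hdeepl

/-- The octads that miss one point of a frame serve as the coordinate hyperplanes. -/
theorem exists_equiv_point {p x y : ι} (hpx : p ≠ x) (hpy : p ≠ y) (hxy : x ≠ y) :
    ∃ e : ι ≃ Point, e p = 0 ∧ e x = Pi.single 0 1 ∧ e y = Pi.single 1 1 ∧
      (∀ Q, Q.card = 4 → (IsDeep C Q ↔ ∑ x ∈ Q, e x = 0)) ∧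
      ∃ H ∈ C, H.card = 6 ∧ e.symm 0 ∈ H ∧ ∀ i, e.symm (Pi.single i 1) ∈ H := by
  obtain ⟨q, hq, rfl, rfl, hqp, hH⟩ := hC.exists_frame h0 hpx hpy hxy
  choose O hOC hO8 hpO hqO using hC.exists_octad_frame h0 hq hqp hH
  let f : ι → Point := fun z i => if z ∈ O i then 0 else 1
  have hfp : f p = 0 := funext fun i => if_pos (hpO i)
  have hfq (i : Fin 4) : f (q i) = Pi.single i 1 := by
    ext j
    simp only [f, hqO, Pi.single_apply, ne_eq, ite_not, eq_comm]
  have hdeep (Q : Finset ι) (hQ : Q.card = 4) (hd : IsDeep C Q) : ∑ x ∈ Q, f x = 0 := by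
    ext i
    have heven : Even (Q \ O i).card := by
      have := Finset.card_sdiff_add_card_inter Q (O i)
      have := hC.even_card_inter_octad h0 (hOC i) (hO8 i) hQ hd
      grind
    rw [Finset.sum_apply, Pi.zero_apply, ← ZMod.natCast_eq_zero_iff_even.mpr heven,
      Finset.sdiff_eq_filter, Finset.card_filter, Nat.cast_sum]
    simp [f]
  have hbij : f.Bijective := (Fintype.bijective_iff_surjective_and_card f).mpr
    ⟨hC.surjective_of_sum_eq_zero_of_isDeep h0 hfp hfq hdeep, by rw [hC.card_index]; rfl⟩
  let e := Equiv.ofBijective f hbij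
  have hsymm (z : ι) : e.symm (f z) = z := e.symm_apply_apply z
  obtain ⟨H, hH⟩ := hH
  obtain ⟨hHC, hH6, hsub⟩ := mem_blocks.mp hH
  refine ⟨e, hfp, hfq 0, hfq 1,
    fun Q hQ => ⟨hdeep Q hQ, hC.isDeep_of_sum_eq_zero h0 hbij.1 hdeep hQ⟩, H, hHC, hH6, ?_,
    fun i => ?_⟩
  · rw [← hfp, hsymm]
    exact hsub (Finset.mem_insert_self _ _)
  · rw [← hfq, hsymm]
    exact hsub (Finset.mem_insert_of_mem (Finset.mem_image_of_mem q (Finset.mem_univ i)))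

end IsNRCode

end Labelling

section Relabelling

variable {ι κ : Type*}

/-- The image of the code `C` under a bijection of the coordinate sets. -/
def relabel (e : ι ≃ κ) (C : Finset (Finset ι)) : Finset (Finset κ) :=
  C.map (Finset.mapEmbedding e.toEmbedding).toEmbedding

lemma mem_relabel {e : ι ≃ κ} {C : Finset (Finset ι)} {B : Finset κ} :
    B ∈ relabel e C ↔ ∃ A ∈ C, A.map e.toEmbedding = B := Finset.mem_map

lemma map_mem_relabel {e : ι ≃ κ} {C : Finset (Finset ι)} {A : Finset ι} :
    A.map e.toEmbedding ∈ relabel e C ↔ A ∈ C :=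
  Finset.mem_map' (Finset.mapEmbedding e.toEmbedding).toEmbedding

lemma relabel_trans {μ : Type*} (e : ι ≃ κ) (f : κ ≃ μ) (C : Finset (Finset ι)) :
    relabel (e.trans f) C = relabel f (relabel e C) := by
  ext A
  simp only [mem_relabel, exists_exists_and_eq_and, Finset.map_map]
  rfl

variable [DecidableEq ι] [DecidableEq κ]

lemma map_symmDiff_map (e : ι ≃ κ) (A B : Finset ι) :
    symmDiff (A.map e.toEmbedding) (B.map e.toEmbedding) = (symmDiff A B).map e.toEmbedding := by
  simp only [Finset.map_eq_image]
  exact (Finset.image_symmDiff A B e.injective).symm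

lemma isDeep_relabel {e : ι ≃ κ} {C : Finset (Finset ι)} {X : Finset ι} :
    IsDeep (relabel e C) (X.map e.toEmbedding) ↔ IsDeep C X := by
  simp only [IsDeep, mem_relabel, forall_exists_index, and_imp, forall_apply_eq_imp_iff₂,
    map_symmDiff_map, Finset.card_map]

protected lemma IsNRCode.relabel [Fintype ι] [Fintype κ] {C : Finset (Finset ι)} (hC : IsNRCode C)
    (e : ι ≃ κ) : IsNRCode (relabel e C) where
  card_index := (Fintype.card_congr e).symm.trans hC.card_index
  card_code := (Finset.card_map _).trans hC.card_code
  six_le_dist := by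
    simp only [mem_relabel, forall_exists_index, and_imp, forall_apply_eq_imp_iff₂,
      map_symmDiff_map, Finset.card_map]
    exact fun A hA B hB hne => hC.six_le_dist A hA B hB fun h => hne (h ▸ rfl)

end Relabelling

section Affine

/-- A Nordstrom-Robinson code on the affine space `Point`, containing the zero word, all of whose
affine planes have maximal distance from the code. -/
structure IsAffineNRCode (D : Finset (Finset Point)) : Prop extends IsNRCode D where
  empty_mem : ∅ ∈ D
  isDeep_of_sum_eq_zero : ∀ Q, Q.card = 4 → ∑ x ∈ Q, x = 0 → IsDeep D Q

lemma IsNRCode.isAffineNRCode_relabel {ι : Type*} [Fintype ι] [DecidableEq ι]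
    {C : Finset (Finset ι)} (hC : IsNRCode C) (h0 : ∅ ∈ C) {e : ι ≃ Point}
    (hdeep : ∀ Q, Q.card = 4 → (IsDeep C Q ↔ ∑ x ∈ Q, e x = 0)) :
    IsAffineNRCode (relabel e C) where
  toIsNRCode := hC.relabel e
  empty_mem := mem_relabel.mpr ⟨∅, h0, Finset.map_empty _⟩
  isDeep_of_sum_eq_zero := by
    intro Q hQ hsum
    obtain ⟨R, rfl⟩ := e.finsetCongr.surjective Q
    rw [Equiv.finsetCongr_apply] at hQ hsum ⊢
    rw [Finset.card_map] at hQ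
    rw [Finset.sum_map] at hsum
    exact isDeep_relabel.mpr ((hdeep R hQ).mpr hsum)

/-- The affine hyperplane `φ ⬝ᵥ x = c`, or if `φ = 0` one of the degenerate forms `∅` and `univ`. -/
def halfspace (φ : Point) (c : ZMod 2) : Finset Point :=
  Finset.univ.filter fun x => φ ⬝ᵥ x = c

lemma mem_halfspace {φ : Point} {c : ZMod 2} {x : Point} : x ∈ halfspace φ c ↔ φ ⬝ᵥ x = c :=
  Finset.mem_filter_univ x

lemma card_halfspace (φ : Point) (c : ZMod 2) :
    (halfspace φ c).card = if φ = 0 then if c = 0 then 16 else 0 else 8 := by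
  revert φ c
  decide +kernel

lemma sum_halfspace (φ : Point) (c : ZMod 2) : ∑ x ∈ halfspace φ c, x = 0 := by
  revert φ c
  decide +kernel

lemma sum_mem_halfspace {φ : Point} {c : ZMod 2} {T : Finset Point} (hT : T.card = 3)
    (hTP : T ⊆ halfspace φ c) : ∑ x ∈ T, x ∈ halfspace φ c := by
  rw [mem_halfspace, dotProduct_sum, Finset.sum_congr rfl fun x hx => mem_halfspace.mp (hTP hx),
    Finset.sum_const, hT]
  exact (by decide : ∀ c : ZMod 2, 3 • c = c) c

lemma symmDiff_halfspace (φ ψ : Point) (c d : ZMod 2) :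
    symmDiff (halfspace φ c) (halfspace ψ d) = halfspace (φ + ψ) (c + d + 1) := by
  ext x
  simp only [Finset.mem_symmDiff, mem_halfspace, add_dotProduct]
  generalize φ ⬝ᵥ x = a
  generalize ψ ⬝ᵥ x = b
  revert a b c d
  decide

lemma halfspace_eq_of_four_lt_card_inter {φ ψ : Point} {c d : ZMod 2}
    (hφ : (halfspace φ c).card = 8) (hψ : (halfspace ψ d).card = 8)
    (h4 : 4 < (halfspace φ c ∩ halfspace ψ d).card) : halfspace φ c = halfspace ψ d := by
  have hdist := card_symmDiff_add_two_mul_card_inter (halfspace φ c) (halfspace ψ d)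
  have hcard := card_halfspace (φ + ψ) (c + d + 1)
  rw [← symmDiff_halfspace] at hcard
  refine symmDiff_eq_bot.mp (Finset.card_eq_zero.mp ?_)
  split_ifs at hcard <;> omega

lemma sum_symmDiff {α R : Type*} [DecidableEq α] [Ring R] [CharP R 2] (A B : Finset α)
    (f : α → R) : ∑ x ∈ symmDiff A B, f x = ∑ x ∈ A, f x + ∑ x ∈ B, f x := by
  rw [Finset.symmDiff_def, Finset.sum_union disjoint_sdiff_sdiff,
    ← Finset.sum_inter_add_sum_sdiff A B, ← Finset.sum_inter_add_sum_sdiff B A,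
    Finset.inter_comm B A, add_add_add_comm, CharTwo.add_self_eq_zero, zero_add]

lemma card_ne_two_of_sum_eq_zero {A : Finset Point} (hA : ∑ x ∈ A, x = 0) : A.card ≠ 2 := by
  intro h
  obtain ⟨x, y, hxy, rfl⟩ := Finset.card_eq_two.mp h
  rw [Finset.sum_pair hxy] at hA
  exact hxy (CharTwo.add_eq_zero.mp hA)

lemma card_plane {x y : Point} (hx : x ≠ 0) (hy : y ≠ 0) (hxy : x ≠ y) :
    ({0, x, y, x + y} : Finset Point).card = 4 := by
  rw [Finset.card_eq_four]
  exact ⟨0, x, y, x + y, hx.symm, hy.symm, fun h => hxy (CharTwo.add_eq_zero.mp h.symm), hxy,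
    fun h => hy (left_eq_add.mp h), fun h => hx (right_eq_add.mp h), rfl⟩

lemma sum_plane {R : Type*} [AddCommMonoid R] (f : Point → R) {x y : Point} (hx : x ≠ 0)
    (hy : y ≠ 0) (hxy : x ≠ y) :
    ∑ z ∈ ({0, x, y, x + y} : Finset Point), f z = f 0 + (f x + (f y + f (x + y))) := by
  have h0 : x + y ≠ 0 := fun h => hxy (CharTwo.add_eq_zero.mp h)
  rw [Finset.sum_insert (by simp [hx.symm, hy.symm, h0.symm]),
    Finset.sum_insert (by simp [hxy, hy]), Finset.sum_pair (by simp [hx])]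

lemma sum_plane_eq_zero {x y : Point} (hx : x ≠ 0) (hy : y ≠ 0) (hxy : x ≠ y) :
    ∑ z ∈ ({0, x, y, x + y} : Finset Point), z = 0 := by
  rw [sum_plane _ hx hy hxy, zero_add, ← add_assoc, CharTwo.add_self_eq_zero]

namespace IsAffineNRCode

variable {D : Finset (Finset Point)} (hD : IsAffineNRCode D)
include hD

lemma sum_ne_zero_of_subset_hexad {H Q : Finset Point} (hH : H ∈ D) (hH6 : H.card = 6)
    (hQH : Q ⊆ H) (hQ : Q.card = 4) : ∑ x ∈ Q, x ≠ 0 := by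
  intro hsum
  have hempty := (hD.isDeep_iff_blocks_eq_empty hD.empty_mem hQ).mp
    (hD.isDeep_of_sum_eq_zero Q hQ hsum)
  exact Finset.ne_empty_of_mem (mem_blocks.mpr ⟨hH, hH6, hQH⟩) hempty

/-- The fifteen pairs in a hexad have distinct non-zero sums, which are thus all of the non-zero
vectors; were the sum of the hexad one of them, the other four points would form a plane. -/
lemma sum_hexad {H : Finset Point} (hH : H ∈ D) (hH6 : H.card = 6) : ∑ x ∈ H, x = 0 := by
  have hinj : Set.InjOn (fun P : Finset Point => ∑ x ∈ P, x) (H.powersetCard 2) := by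
    intro P hP P' hP' heq
    obtain ⟨hPH, hP2⟩ := Finset.mem_powersetCard.mp hP
    obtain ⟨hPH', hP2'⟩ := Finset.mem_powersetCard.mp hP'
    have hsum : ∑ x ∈ symmDiff P P', x = 0 := by
      rw [sum_symmDiff]
      exact CharTwo.add_eq_zero.mpr heq
    have hcard := card_symmDiff_add_two_mul_card_inter P P'
    have h2 := card_ne_two_of_sum_eq_zero hsum
    have h4 : (symmDiff P P').card ≠ 4 := fun h4 => hD.sum_ne_zero_of_subset_hexad hH hH6
      (Finset.symmDiff_subset_union.trans (Finset.union_subset hPH hPH')) h4 hsum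
    exact symmDiff_eq_bot.mp (Finset.card_eq_zero.mp (by omega))
  have himage : (H.powersetCard 2).image (fun P => ∑ x ∈ P, x) = Finset.univ.erase 0 := by
    refine Finset.eq_of_subset_of_card_le (Finset.image_subset_iff.mpr fun P hP => ?_) ?_
    · refine Finset.mem_erase.mpr ⟨fun h => card_ne_two_of_sum_eq_zero h ?_, Finset.mem_univ _⟩
      exact (Finset.mem_powersetCard.mp hP).2
    · rw [Finset.card_image_of_injOn hinj, Finset.card_powersetCard, hH6]
      decide
  by_contra hne
  obtain ⟨P, hP, hsum⟩ := Finset.mem_image.mp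
    (himage ▸ Finset.mem_erase.mpr ⟨hne, Finset.mem_univ _⟩)
  obtain ⟨hPH, hP2⟩ := Finset.mem_powersetCard.mp hP
  refine hD.sum_ne_zero_of_subset_hexad hH hH6 (Q := H \ P) Finset.sdiff_subset
    (by rw [Finset.card_sdiff_of_subset hPH, hH6, hP2]) ?_
  have hadd := Finset.sum_sdiff (f := fun x : Point => x) hPH
  rwa [show ∑ x ∈ P, x = ∑ x ∈ H, x from hsum, add_eq_right] at hadd

lemma exists_octad_eq_halfspace {O : Finset Point} (hO : O ∈ D) (hO8 : O.card = 8) :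
    ∃ φ c, O = halfspace φ c := by
  let f : Point → ZMod 2 := fun x => if x ∈ O then 1 else 0
  have hadd (x y : Point) : f (x + y) + f 0 = f x + f 0 + (f y + f 0) := by
    by_cases hx : x = 0
    · simp [hx, CharTwo.add_self_eq_zero, add_comm]
    by_cases hy : y = 0
    · simp [hy, CharTwo.add_self_eq_zero]
    by_cases hxy : x = y
    · simp [hxy, CharTwo.add_self_eq_zero]
    have hQ := card_plane hx hy hxy
    have heven := hD.even_card_inter_octad hD.empty_mem hO hO8 hQ
      (hD.isDeep_of_sum_eq_zero _ hQ (sum_plane_eq_zero hx hy hxy))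
    have hf : ∑ z ∈ ({0, x, y, x + y} : Finset Point), f z = 0 := by
      rw [Finset.sum_boole, Finset.filter_mem_eq_inter]
      exact ZMod.natCast_eq_zero_iff_even.mpr heven
    rw [sum_plane _ hx hy hxy] at hf
    linear_combination hf - CharTwo.two_eq_zero (R := ZMod 2) * (f x + f y + f 0)
  let g : Point →+ ZMod 2 := AddMonoidHom.mk' (fun x => f x + f 0) hadd
  refine ⟨fun i => g (Pi.single i 1), 1 + f 0, ?_⟩
  ext x
  have hg : g x = (fun i => g (Pi.single i 1)) ⬝ᵥ x := by
    have hsingle (i : Fin 4) (a : ZMod 2) : g (Pi.single i a) = g (Pi.single i 1) * a := by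
      obtain rfl | rfl : a = 0 ∨ a = 1 := by revert a; decide
      · rw [Pi.single_zero, map_zero, mul_zero]
      · rw [mul_one]
    conv_lhs => rw [← Finset.univ_sum_single x, map_sum]
    exact Finset.sum_congr rfl fun i _ => hsingle i (x i)
  rw [mem_halfspace, ← hg]
  simp [g, f]

lemma isDeep_insert_sum {T : Finset Point} (hT : T.card = 3) :
    ∑ x ∈ T, x ∉ T ∧ IsDeep D (insert (∑ x ∈ T, x) T) := by
  have hsT : ∑ x ∈ T, x ∉ T := by
    intro hs
    have hadd := Finset.add_sum_erase T (fun x => x) hs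
    exact card_ne_two_of_sum_eq_zero (add_eq_left.mp hadd)
      (by rw [Finset.card_erase_of_mem hs, hT])
  refine ⟨hsT, hD.isDeep_of_sum_eq_zero _ (by rw [Finset.card_insert_of_notMem hsT, hT]) ?_⟩
  rw [Finset.sum_insert hsT, CharTwo.add_self_eq_zero]

/-- An octad through four points of a half-space with non-zero sum contains a fifth point of it,
and two octads agree once they share five points. -/
lemma halfspace_mem (φ : Point) (c : ZMod 2) : halfspace φ c ∈ D := by
  have hcard := card_halfspace φ c
  by_cases hφ : φ = 0
  · by_cases hc : c = 0
    · rw [if_pos hφ, if_pos hc] at hcard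
      rw [(Finset.card_eq_iff_eq_univ _).mp hcard, ← Finset.compl_empty]
      exact hD.compl_mem hD.empty_mem
    · rw [if_pos hφ, if_neg hc] at hcard
      exact Finset.card_eq_zero.mp hcard ▸ hD.empty_mem
  rw [if_neg hφ] at hcard
  obtain ⟨T, hTP, hT⟩ := Finset.exists_subset_card_eq (s := halfspace φ c) (n := 3) (by omega)
  obtain ⟨d, hdP, hdT⟩ := Finset.exists_mem_notMem_of_card_lt_card
    (s := insert (∑ x ∈ T, x) T) (t := halfspace φ c)
    ((Finset.card_insert_le _ _).trans_lt (by omega))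
  obtain ⟨hsT, hdeep⟩ := hD.isDeep_insert_sum hT
  rw [Finset.mem_insert, not_or] at hdT
  have hQ : (insert d T).card = 4 := by rw [Finset.card_insert_of_notMem hdT.2, hT]
  obtain ⟨O, hO⟩ : (blocks D 8 (insert d T)).Nonempty := Finset.card_pos.mp <| by
    have := hD.card_octads_add_two_mul_card_hexads hD.empty_mem hQ
    omega
  obtain ⟨hOD, hO8, hQO⟩ := mem_blocks.mp hO
  have hTO := (Finset.subset_insert d T).trans hQO
  have hsO := hD.mem_octad_of_isDeep_insert hD.empty_mem hT (mem_blocks.mpr ⟨hOD, hO8, hTO⟩)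
    hsT hdeep
  have hinter : insert d (insert (∑ x ∈ T, x) T) ⊆ O ∩ halfspace φ c := by
    simp only [Finset.insert_subset_iff, Finset.mem_inter]
    exact ⟨⟨hQO (Finset.mem_insert_self d T), hdP⟩, ⟨hsO, sum_mem_halfspace hT hTP⟩,
      Finset.subset_inter hTO hTP⟩
  have h5 := Finset.card_le_card hinter
  rw [Finset.card_insert_of_notMem (by simp [hdT]), Finset.card_insert_of_notMem hsT, hT] at h5
  obtain ⟨ψ, b, rfl⟩ := hD.exists_octad_eq_halfspace hOD hO8
  exact halfspace_eq_of_four_lt_card_inter hO8 hcard h5 ▸ hOD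

lemma sum_eq_zero {A : Finset Point} (hA : A ∈ D) : ∑ x ∈ A, x = 0 := by
  have hcompl : ∑ x ∈ Aᶜ, x = ∑ x ∈ A, x := CharTwo.add_eq_zero.mp <|
    (Finset.sum_compl_add_sum A _).trans (by decide)
  obtain h | h | h | h | h := hD.card_cases hD.empty_mem hA
  · rw [Finset.card_eq_zero.mp h, Finset.sum_empty]
  · exact hD.sum_hexad hA h
  · obtain ⟨φ, c, rfl⟩ := hD.exists_octad_eq_halfspace hA h
    exact sum_halfspace φ c
  · rw [← hcompl, hD.sum_hexad (hD.compl_mem hA) (by rw [Finset.card_compl, h]; rfl)]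
  · rw [(Finset.card_eq_iff_eq_univ A).mp h]
    decide

lemma translate {A : Finset Point} (hA : A ∈ D) : IsAffineNRCode (D.image (symmDiff A)) where
  toIsNRCode := hD.toIsNRCode.translate A
  empty_mem := Finset.mem_image.mpr ⟨A, hA, symmDiff_self A⟩
  isDeep_of_sum_eq_zero := by
    simp only [IsDeep, Finset.forall_mem_image]
    intro Q hQ hsum B hB
    have hsum' : ∑ x ∈ symmDiff Q (symmDiff A B), x = 0 := by
      rw [sum_symmDiff, sum_symmDiff, hsum, hD.sum_eq_zero hA, hD.sum_eq_zero hB, add_zero,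
        add_zero]
    have heven : Even (symmDiff Q (symmDiff A B)).card := by
      rw [even_card_symmDiff_iff ((even_card_symmDiff_iff (hD.even_card hD.empty_mem hB)).mpr
        (hD.even_card hD.empty_mem hA)), hQ]
      decide
    have h0 : (symmDiff Q (symmDiff A B)).card ≠ 0 := by
      intro h
      have hQAB : Q = symmDiff A B := symmDiff_eq_bot.mp (Finset.card_eq_zero.mp h)
      have hAB := hD.eq_of_dist_le hA hB (by rw [← hQAB, hQ]; norm_num)
      rw [hQAB, hAB, symmDiff_self] at hQ
      exact absurd hQ (by decide)
    have h2 := card_ne_two_of_sum_eq_zero hsum'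
    grind

lemma symmDiff_halfspace_mem {A : Finset Point} (hA : A ∈ D) (φ : Point) (c : ZMod 2) :
    symmDiff A (halfspace φ c) ∈ D := by
  obtain ⟨B, hB, hAB⟩ := Finset.mem_image.mp ((hD.translate hA).halfspace_mem φ c)
  rwa [← hAB, symmDiff_symmDiff_cancel_left]

end IsAffineNRCode
end Affine

section Kerdock

/-- The products of two distinct coordinates, complementary pairs of coordinates being adjacent. -/
def quad (x : Point) : Fin 6 → ZMod 2 :=
  ![x 0 * x 1, x 2 * x 3, x 0 * x 2, x 1 * x 3, x 0 * x 3, x 1 * x 2]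

/-- The quadratic moments of a set of points. The sets of even size with sum zero form the extended
Hamming code, and their moments parametrize its cosets modulo the first order Reed-Muller code. -/
def moment (A : Finset Point) : Fin 6 → ZMod 2 := ∑ x ∈ A, quad x

/-- The Pfaffian of the alternating form with the entries `m`, listed in the order of `quad`. -/
def pfaffian (m : Fin 6 → ZMod 2) : ZMod 2 := m 0 * m 1 + m 2 * m 3 + m 4 * m 5

lemma moment_symmDiff (A B : Finset Point) : moment (symmDiff A B) = moment A + moment B :=
  sum_symmDiff A B quad

lemma moment_halfspace (φ : Point) (c : ZMod 2) : moment (halfspace φ c) = 0 := by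
  revert φ c
  decide +kernel

lemma even_card_halfspace (φ : Point) (c : ZMod 2) : Even (halfspace φ c).card := by
  rw [card_halfspace]
  split_ifs <;> decide

/-- The words of the extended Hamming code of length `16` with quadratic moments `m`. -/
def momentFiber (m : Fin 6 → ZMod 2) : Finset (Finset Point) :=
  Finset.univ.filter fun A => Even A.card ∧ ∑ x ∈ A, x = 0 ∧ moment A = m

lemma mem_momentFiber {m : Fin 6 → ZMod 2} {A : Finset Point} :
    A ∈ momentFiber m ↔ Even A.card ∧ ∑ x ∈ A, x = 0 ∧ moment A = m := by
  simp [momentFiber]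

lemma symmDiff_mem_momentFiber {m n : Fin 6 → ZMod 2} {A B : Finset Point}
    (hA : A ∈ momentFiber m) (hB : B ∈ momentFiber n) : symmDiff A B ∈ momentFiber (m + n) := by
  obtain ⟨hA2, hA0, rfl⟩ := mem_momentFiber.mp hA
  obtain ⟨hB2, hB0, rfl⟩ := mem_momentFiber.mp hB
  refine mem_momentFiber.mpr ⟨(even_card_symmDiff_iff hB2).mpr hA2, ?_, moment_symmDiff A B⟩
  rw [sum_symmDiff, hA0, hB0, add_zero]

lemma halfspace_mem_momentFiber (φ : Point) (c : ZMod 2) : halfspace φ c ∈ momentFiber 0 :=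
  mem_momentFiber.mpr ⟨even_card_halfspace φ c, sum_halfspace φ c, moment_halfspace φ c⟩

lemma sum_one_add_mul_one_add {A : Finset Point} (hA : A ∈ momentFiber 0) (k l : Fin 4) :
    ∑ x ∈ A, (1 + x k) * (1 + x l) = 0 := by
  obtain ⟨heven, hsum, hmoment⟩ := mem_momentFiber.mp hA
  have hcard : (A.card : ZMod 2) = 0 := ZMod.natCast_eq_zero_iff_even.mpr heven
  have hcoord (i : Fin 4) : ∑ x ∈ A, x i = 0 := by
    rw [← Finset.sum_apply, hsum, Pi.zero_apply]
  have hquad (i : Fin 6) : ∑ x ∈ A, quad x i = 0 := by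
    rw [← Finset.sum_apply, ← moment, hmoment, Pi.zero_apply]
  have hprod : ∑ x ∈ A, x k * x l = 0 := by
    obtain rfl | hkl := eq_or_ne k l
    · simp only [← sq, ZMod.pow_card, hcoord]
    · have hindex : ∀ k l : Fin 4, k ≠ l → ∃ i, ∀ x, x k * x l = quad x i := by decide +kernel
      obtain ⟨i, hi⟩ := hindex k l hkl
      simp only [hi, hquad]
  simp only [add_mul, one_mul, mul_add, mul_one, Finset.sum_add_distrib, Finset.sum_const,
    nsmul_eq_mul, hcard, hcoord, hprod, add_zero]

/-- At a point of `A` of minimal weight, some product `(1 + x k) * (1 + x l)` is `1` although it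
vanishes at the other points of `A`. -/
lemma eq_empty_of_mem_momentFiber {A : Finset Point} (hA : A ∈ momentFiber 0) (h0 : 0 ∉ A)
    (h1 : ∀ i, Pi.single i 1 ∉ A) : A = ∅ := by
  have hsmall : ∀ x : Point, hammingNorm x < 2 → x = 0 ∨ ∃ i, x = Pi.single i 1 := by
    decide +kernel
  have hisolate : ∀ z : Point, 2 ≤ hammingNorm z →
      (∃ k l, (1 + z k) * (1 + z l) = 1 ∧
        ∀ x, hammingNorm z ≤ hammingNorm x → x ≠ z → (1 + x k) * (1 + x l) = 0) ∨
      ∀ x, hammingNorm z ≤ hammingNorm x → x = z := by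
    decide +kernel
  by_contra hne
  obtain ⟨z, hz, hmin⟩ := A.exists_min_image hammingNorm (Finset.nonempty_iff_ne_empty.mpr hne)
  have hz2 : 2 ≤ hammingNorm z := by
    by_contra! hlt
    obtain rfl | ⟨i, rfl⟩ := hsmall z hlt
    exacts [h0 hz, h1 i hz]
  obtain ⟨k, l, hone, hzero⟩ | hall := hisolate z hz2
  · have hsum := sum_one_add_mul_one_add hA k l
    rw [Finset.sum_eq_single_of_mem z hz fun x hx hxz => hzero x (hmin x hx) hxz, hone] at hsum
    exact one_ne_zero hsum
  · have hAz : A = {z} :=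
      Finset.eq_singleton_iff_unique_mem.mpr ⟨hz, fun x hx => hall x (hmin x hx)⟩
    have heven := (mem_momentFiber.mp hA).1
    rw [hAz, Finset.card_singleton] at heven
    exact absurd heven (by decide)

lemma exists_eq_halfspace_of_mem_momentFiber {A : Finset Point} (hA : A ∈ momentFiber 0) :
    ∃ φ c, A = halfspace φ c := by
  let c : ZMod 2 := if 0 ∈ A then 0 else 1
  let φ : Point := fun i => if Pi.single i 1 ∈ A then c else c + 1
  have hmem := symmDiff_mem_momentFiber hA (halfspace_mem_momentFiber φ c)
  rw [add_zero] at hmem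
  refine ⟨φ, c, symmDiff_eq_bot.mp (eq_empty_of_mem_momentFiber hmem ?_ fun i => ?_)⟩
  · by_cases h : 0 ∈ A <;> simp [Finset.mem_symmDiff, mem_halfspace, c, h]
  · by_cases h : Pi.single i 1 ∈ A <;> simp [Finset.mem_symmDiff, mem_halfspace, φ, h]

lemma card_momentFiber_le (m : Fin 6 → ZMod 2) : (momentFiber m).card ≤ 32 := by
  obtain h | ⟨A, hA⟩ := (momentFiber m).eq_empty_or_nonempty
  · rw [h]
    norm_num
  have hsub : (momentFiber m).image (symmDiff A) ⊆
      (Finset.univ : Finset (Point × ZMod 2)).image fun p => halfspace p.1 p.2 := by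
    refine Finset.image_subset_iff.mpr fun B hB => ?_
    obtain ⟨φ, c, h⟩ := exists_eq_halfspace_of_mem_momentFiber
      (CharTwo.add_self_eq_zero m ▸ symmDiff_mem_momentFiber hA hB)
    exact Finset.mem_image.mpr ⟨(φ, c), Finset.mem_univ _, h.symm⟩
  rw [← Finset.card_image_of_injective _ (symmDiff_right_injective A)]
  exact (Finset.card_le_card hsub).trans Finset.card_image_le

lemma exists_plane_of_pfaffian_eq_zero {m : Fin 6 → ZMod 2} (hm : pfaffian m = 0) (hm0 : m ≠ 0) :
    ∃ Q ∈ momentFiber m, Q.card = 4 := by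
  have hwedge : ∀ m : Fin 6 → ZMod 2, pfaffian m = 0 → m ≠ 0 → ∃ u v : Point,
      u ≠ 0 ∧ v ≠ 0 ∧ u ≠ v ∧ quad 0 + (quad u + (quad v + quad (u + v))) = m := by
    decide +kernel
  obtain ⟨u, v, hu, hv, huv, rfl⟩ := hwedge m hm hm0
  have hcard := card_plane hu hv huv
  exact ⟨{0, u, v, u + v}, mem_momentFiber.mpr
    ⟨hcard.symm ▸ by decide, sum_plane_eq_zero hu hv huv, sum_plane _ hu hv huv⟩, hcard⟩

namespace IsAffineNRCode

variable {D : Finset (Finset Point)} (hD : IsAffineNRCode D)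
include hD

lemma mem_momentFiber_moment {A : Finset Point} (hA : A ∈ D) : A ∈ momentFiber (moment A) :=
  mem_momentFiber.mpr ⟨hD.even_card hD.empty_mem hA, hD.sum_eq_zero hA, rfl⟩

/-- If the Pfaffian vanishes then `A` and `B` differ by a plane and a half-space, so that a codeword
has distance `4` from `B`, unless they differ by a half-space only. -/
lemma moment_eq_of_pfaffian_eq_zero {A B : Finset Point} (hA : A ∈ D) (hB : B ∈ D)
    (hAB : pfaffian (moment A + moment B) = 0) : moment A = moment B := by
  by_contra hne
  obtain ⟨Q, hQ, hQ4⟩ := exists_plane_of_pfaffian_eq_zero hAB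
    fun h => hne (CharTwo.add_eq_zero.mp h)
  have hmem := symmDiff_mem_momentFiber (symmDiff_mem_momentFiber (hD.mem_momentFiber_moment hA)
    (hD.mem_momentFiber_moment hB)) hQ
  rw [CharTwo.add_self_eq_zero] at hmem
  obtain ⟨φ, c, hφ⟩ := exists_eq_halfspace_of_mem_momentFiber hmem
  have hdist : symmDiff (symmDiff A (halfspace φ c)) B = Q := by
    rw [← hφ, symmDiff_assoc A B Q, symmDiff_symmDiff_cancel_left, symmDiff_comm B,
      symmDiff_symmDiff_cancel_right]
  have hAφ := hD.eq_of_dist_le (hD.symmDiff_halfspace_mem hA φ c) hB (by rw [hdist, hQ4]; norm_num)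
  rw [hAφ, symmDiff_self] at hdist
  exact absurd hQ4 (by rw [← hdist]; decide)

lemma eight_le_card_image_moment : 8 ≤ (D.image moment).card := by
  have hcard : D.card ≤ 32 * (D.image moment).card :=
    Finset.card_le_mul_card_image D 32 fun m _ => (Finset.card_le_card fun A hA => by
      obtain ⟨hAD, rfl⟩ := Finset.mem_filter.mp hA
      exact hD.mem_momentFiber_moment hAD).trans (card_momentFiber_le m)
  rw [hD.card_code] at hcard
  omega

/-- The sixth point of the hexad is the sum of the five others, the all-ones vector. -/
lemma moment_hexad_frame {H : Finset Point} (hH : H ∈ D) (hH6 : H.card = 6) (h0 : 0 ∈ H)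
    (h1 : ∀ i, Pi.single i 1 ∈ H) : moment H = 1 := by
  set F : Finset Point := insert 0 (Finset.univ.image fun i : Fin 4 => Pi.single i 1)
  have hFH : F ⊆ H :=
    Finset.insert_subset h0 (Finset.image_subset_iff.mpr fun i _ => h1 i)
  obtain ⟨w, hw⟩ := Finset.card_eq_one.mp (show (H \ F).card = 1 by
    rw [Finset.card_sdiff_of_subset hFH, hH6]
    decide)
  have hHF : {w} ∪ F = H := hw ▸ Finset.sdiff_union_of_subset hFH
  have hwF : Disjoint {w} F := hw ▸ Finset.sdiff_disjoint
  have hsum := hD.sum_eq_zero hH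
  rw [← hHF, Finset.sum_union hwF, Finset.sum_singleton] at hsum
  rw [← hHF, moment, Finset.sum_union hwF, Finset.sum_singleton, CharTwo.add_eq_zero.mp hsum]
  decide +kernel

end IsAffineNRCode

/-- The moments of a Nordstrom-Robinson code are `0`, `1` and the six others below, or their images
under `swapPairs`: eight alternating forms with non-singular pairwise differences. -/
def kerdockSet : Finset (Fin 6 → ZMod 2) :=
  {0, 1, ![1, 1, 1, 0, 0, 0], ![1, 1, 0, 1, 0, 0], ![0, 0, 1, 1, 1, 0], ![0, 0, 1, 1, 0, 1],
    ![1, 0, 0, 0, 1, 1], ![0, 1, 0, 0, 1, 1]}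

/-- The action on moments of the exchange of the last two coordinates of points. -/
def swapPairs (m : Fin 6 → ZMod 2) : Fin 6 → ZMod 2 :=
  fun i => m (![0, 1, 4, 5, 2, 3] i)

/-- The alternating forms with a non-singular difference to each member of `T` but themselves. -/
def compatibleForms (T : Finset (Fin 6 → ZMod 2)) : Finset (Fin 6 → ZMod 2) :=
  Finset.univ.filter fun x => ∀ m ∈ T, pfaffian (m + x) = 0 → m = x

lemma forall_mem_kerdockSet_or {S : Finset (Fin 6 → ZMod 2)} (h0 : 0 ∈ S) (h1 : 1 ∈ S)
    (hS : S ⊆ compatibleForms S) (hcard : 8 ≤ S.card) :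
    (∀ m ∈ S, m ∈ kerdockSet) ∨ ∀ m ∈ S, swapPairs m ∈ kerdockSet := by
  have hmixed : ∀ m ∈ compatibleForms {0, 1}, m ∉ kerdockSet → ∀ n ∈ compatibleForms {0, 1, m},
      swapPairs n ∉ kerdockSet → (compatibleForms {0, 1, m, n}).card ≤ 7 := by
    decide +kernel
  have hsub {T : Finset (Fin 6 → ZMod 2)} (hT : T ⊆ S) : S ⊆ compatibleForms T :=
    hS.trans (Finset.monotone_filter_right _ fun _ _ hx m hm => hx m (hT hm))
  by_contra! h
  obtain ⟨⟨m, hm, hm'⟩, n, hn, hn'⟩ := h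
  have hle := hmixed m (hsub (by simp [Finset.insert_subset_iff, h0, h1]) hm) hm' n
    (hsub (by simp [Finset.insert_subset_iff, h0, h1, hm]) hn) hn'
  have := Finset.card_le_card (hsub (T := {0, 1, m, n})
    (by simp [Finset.insert_subset_iff, h0, h1, hm, hn]))
  omega

/-- The Nordstrom-Robinson code as a union of eight cosets of the first order Reed-Muller code. -/
def kerdockCode : Finset (Finset Point) := kerdockSet.biUnion momentFiber

lemma card_kerdockCode_le : kerdockCode.card ≤ 256 := by
  have hset : kerdockSet.card = 8 := by decide
  have hle : kerdockCode.card ≤ kerdockSet.card * 32 :=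
    Finset.card_biUnion_le_card_mul _ _ 32 fun m _ => card_momentFiber_le m
  rwa [hset] at hle

/-- The exchange of the last two coordinates of points. -/
def swapLast : Point ≃+ Point :=
  (LinearEquiv.funCongrLeft (ZMod 2) (ZMod 2) (Equiv.swap (2 : Fin 4) 3)).toAddEquiv

lemma map_swapLast_mem_momentFiber {m : Fin 6 → ZMod 2} {A : Finset Point}
    (hA : A ∈ momentFiber m) : A.map swapLast.toEquiv.toEmbedding ∈ momentFiber (swapPairs m) := by
  obtain ⟨heven, hsum, rfl⟩ := mem_momentFiber.mp hA
  have hquad : ∀ x, quad (swapLast x) = swapPairs (quad x) := by decide +kernel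
  have happly (x : Point) : swapLast.toEquiv.toEmbedding x = swapLast x := rfl
  refine mem_momentFiber.mpr ⟨by rwa [Finset.card_map], ?_, ?_⟩
  · simp only [Finset.sum_map, happly]
    rw [← map_sum, hsum, map_zero]
  · ext i
    simp only [moment, Finset.sum_map, happly, hquad, swapPairs, Finset.sum_apply]

lemma IsNRCode.eq_kerdockCode {D : Finset (Finset Point)} (hD : IsNRCode D)
    (h : ∀ A ∈ D, ∃ m ∈ kerdockSet, A ∈ momentFiber m) : D = kerdockCode := by
  refine Finset.eq_of_subset_of_card_le (fun A hA => ?_) ?_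
  · rw [kerdockCode, Finset.mem_biUnion]
    exact h A hA
  · rw [hD.card_code]
    exact card_kerdockCode_le

/-- The two possible sets of moments are exchanged by `swapLast`. -/
theorem IsAffineNRCode.exists_relabel_eq_kerdockCode {D : Finset (Finset Point)}
    (hD : IsAffineNRCode D) {H : Finset Point} (hH : H ∈ D) (hH6 : H.card = 6) (h0 : 0 ∈ H)
    (h1 : ∀ i, Pi.single i 1 ∈ H) :
    ∃ τ : Point ≃+ Point, τ (Pi.single 0 1) = Pi.single 0 1 ∧ τ (Pi.single 1 1) = Pi.single 1 1 ∧
      relabel τ.toEquiv D = kerdockCode := by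
  have hmem {A : Finset Point} (hA : A ∈ D) : moment A ∈ D.image moment :=
    Finset.mem_image_of_mem moment hA
  have hcompatible : D.image moment ⊆ compatibleForms (D.image moment) := by
    simp only [Finset.image_subset_iff, compatibleForms, Finset.mem_filter_univ,
      Finset.forall_mem_image]
    exact fun A hA B hB => hD.moment_eq_of_pfaffian_eq_zero hB hA
  obtain h | h := forall_mem_kerdockSet_or (hmem hD.empty_mem)
    (hD.moment_hexad_frame hH hH6 h0 h1 ▸ hmem hH) hcompatible hD.eight_le_card_image_moment
  · refine ⟨AddEquiv.refl Point, rfl, rfl, (hD.toIsNRCode.relabel _).eq_kerdockCode ?_⟩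
    simp only [mem_relabel, forall_exists_index, and_imp, forall_apply_eq_imp_iff₂]
    intro A hA
    have hmap : A.map (AddEquiv.refl Point).toEquiv.toEmbedding = A := Finset.map_refl
    exact ⟨moment A, h _ (hmem hA), by rw [hmap]; exact hD.mem_momentFiber_moment hA⟩
  · refine ⟨swapLast, by decide +kernel, by decide +kernel,
      (hD.toIsNRCode.relabel _).eq_kerdockCode ?_⟩
    simp only [mem_relabel, forall_exists_index, and_imp, forall_apply_eq_imp_iff₂]
    exact fun A hA => ⟨swapPairs (moment A), h _ (hmem hA),
      map_swapLast_mem_momentFiber (hD.mem_momentFiber_moment hA)⟩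

end Kerdock

section Leaders

variable {ι κ : Type*} [Fintype ι] [DecidableEq ι] [Fintype κ] [DecidableEq κ]

/-- The standard set of `d ≤ 4` points, part of an affine plane: a coset leader of weight `d`. -/
def leader : ℕ → Finset Point
  | 0 => ∅
  | 1 => {0}
  | 2 => {0, Pi.single 0 1}
  | 3 => {0, Pi.single 0 1, Pi.single 1 1}
  | _ => {0, Pi.single 0 1, Pi.single 1 1, Pi.single 0 1 + Pi.single 1 1}

namespace IsNRCode

lemma exists_relabel_eq_kerdockCode {C : Finset (Finset ι)} (hC : IsNRCode C) (h0 : ∅ ∈ C)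
    {p x y : ι} (hpx : p ≠ x) (hpy : p ≠ y) (hxy : x ≠ y) :
    ∃ e : ι ≃ Point, e p = 0 ∧ e x = Pi.single 0 1 ∧ e y = Pi.single 1 1 ∧
      (∀ Q, Q.card = 4 → IsDeep C Q → ∑ z ∈ Q, e z = 0) ∧ relabel e C = kerdockCode := by
  obtain ⟨e, hp, hx, hy, hdeep, H, hH, hH6, hpH, hframe⟩ := hC.exists_equiv_point h0 hpx hpy hxy
  obtain ⟨τ, hτx, hτy, hτ⟩ := (hC.isAffineNRCode_relabel h0 hdeep).exists_relabel_eq_kerdockCode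
    (map_mem_relabel.mpr hH) ((Finset.card_map _).trans hH6) (Finset.mem_map_equiv.mpr hpH)
    fun i => Finset.mem_map_equiv.mpr (hframe i)
  refine ⟨e.trans τ.toEquiv, ?_, ?_, ?_, fun Q hQ hd => ?_, (relabel_trans _ _ _).trans hτ⟩
  · exact (congrArg τ hp).trans (map_zero τ)
  · exact (congrArg τ hx).trans hτx
  · exact (congrArg τ hy).trans hτy
  · exact (map_sum τ _ Q).symm.trans (by rw [(hdeep Q hQ).mp hd, map_zero])

lemma exists_ne_ne {C : Finset (Finset ι)} (hC : IsNRCode C) (p x : ι) : ∃ y, p ≠ y ∧ x ≠ y := by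
  have hcard : ({p, x} : Finset ι).card < (Finset.univ : Finset ι).card := by
    rw [Finset.card_univ, hC.card_index]
    exact Finset.card_le_two.trans_lt (by norm_num)
  obtain ⟨y, -, hy⟩ := Finset.exists_mem_notMem_of_card_lt_card hcard
  simp only [Finset.mem_insert, Finset.mem_singleton, not_or] at hy
  exact ⟨y, Ne.symm hy.1, Ne.symm hy.2⟩

lemma exists_map_eq_leader_of_card_lt_four {C : Finset (Finset ι)} (hC : IsNRCode C) (h0 : ∅ ∈ C)
    {X : Finset ι} (hX : X.card < 4) :
    ∃ e : ι ≃ Point, relabel e C = kerdockCode ∧ X.map e.toEmbedding = leader X.card := by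
  have hframe {p x y : ι} := hC.exists_relabel_eq_kerdockCode (p := p) (x := x) (y := y) h0
  obtain hd | hd | hd | hd : X.card = 0 ∨ X.card = 1 ∨ X.card = 2 ∨ X.card = 3 := by omega
  · have hpos : 0 < Fintype.card ι := by
      rw [hC.card_index]
      norm_num
    obtain ⟨p⟩ := Fintype.card_pos_iff.mp hpos
    obtain ⟨x, hx, -⟩ := hC.exists_ne_ne p p
    obtain ⟨y, hpy, hxy⟩ := hC.exists_ne_ne p x
    obtain ⟨e, -, -, -, -, he⟩ := hframe hx hpy hxy
    exact ⟨e, he, by simp [leader, Finset.card_eq_zero.mp hd]⟩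
  · obtain ⟨p, rfl⟩ := Finset.card_eq_one.mp hd
    obtain ⟨x, hx, -⟩ := hC.exists_ne_ne p p
    obtain ⟨y, hpy, hxy⟩ := hC.exists_ne_ne p x
    obtain ⟨e, hp, -, -, -, he⟩ := hframe hx hpy hxy
    exact ⟨e, he, by simp [hd, leader, hp]⟩
  · obtain ⟨p, x, hpx, rfl⟩ := Finset.card_eq_two.mp hd
    obtain ⟨y, hpy, hxy⟩ := hC.exists_ne_ne p x
    obtain ⟨e, hp, hx, -, -, he⟩ := hframe hpx hpy hxy
    exact ⟨e, he, by simp [hd, leader, hp, hx]⟩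
  · obtain ⟨p, x, y, hpx, hpy, hxy, rfl⟩ := Finset.card_eq_three.mp hd
    obtain ⟨e, hp, hx, hy, -, he⟩ := hframe hpx hpy hxy
    exact ⟨e, he, by simp [hd, leader, hp, hx, hy]⟩

/-- In weight `4`, the fourth point of a coset leader is the sum of the three others. -/
lemma exists_map_eq_leader_of_isDeep {C : Finset (Finset ι)} (hC : IsNRCode C) (h0 : ∅ ∈ C)
    {X : Finset ι} (hX4 : X.card = 4) (hX : IsDeep C X) :
    ∃ e : ι ≃ Point, relabel e C = kerdockCode ∧ X.map e.toEmbedding = leader 4 := by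
  obtain ⟨z, T, hz, rfl, hT⟩ := Finset.card_eq_succ.mp hX4
  obtain ⟨p, x, y, hpx, hpy, hxy, rfl⟩ := Finset.card_eq_three.mp hT
  obtain ⟨e, hp, hx, hy, hdeep, he⟩ := hC.exists_relabel_eq_kerdockCode h0 hpx hpy hxy
  have hsum := hdeep _ hX4 hX
  rw [Finset.sum_insert hz, Finset.sum_insert (by simp [hpx, hpy]), Finset.sum_pair hxy, hp, hx,
    hy, zero_add] at hsum
  refine ⟨e, he, ?_⟩
  simp only [leader, Finset.map_insert, Finset.map_singleton, Equiv.coe_toEmbedding, hp, hx, hy,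
    CharTwo.add_eq_zero.mp hsum]
  decide +kernel

theorem exists_map_eq_leader {C : Finset (Finset ι)} (hC : IsNRCode C) (h0 : ∅ ∈ C) {X : Finset ι}
    (hX : ∀ A ∈ C, X.card ≤ (symmDiff X A).card) :
    ∃ e : ι ≃ Point, relabel e C = kerdockCode ∧ X.map e.toEmbedding = leader X.card := by
  obtain ⟨A, hA, hle⟩ := hC.exists_dist_le_four h0 X
  obtain hlt | h4 := ((hX A hA).trans hle).lt_or_eq
  · exact hC.exists_map_eq_leader_of_card_lt_four h0 hlt
  · rw [h4] at hX ⊢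
    exact hC.exists_map_eq_leader_of_isDeep h0 h4 hX

theorem exists_relabel_eq_of_card_eq {C : Finset (Finset ι)} {D : Finset (Finset κ)}
    (hC : IsNRCode C) (hD : IsNRCode D) (hC0 : ∅ ∈ C) (hD0 : ∅ ∈ D) {X : Finset ι} {Y : Finset κ}
    (hX : ∀ A ∈ C, X.card ≤ (symmDiff X A).card) (hY : ∀ B ∈ D, Y.card ≤ (symmDiff Y B).card)
    (hXY : X.card = Y.card) :
    ∃ σ : ι ≃ κ, relabel σ C = D ∧ X.map σ.toEmbedding = Y := by
  obtain ⟨e, he, heX⟩ := hC.exists_map_eq_leader hC0 hX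
  obtain ⟨f, hf, hfY⟩ := hD.exists_map_eq_leader hD0 hY
  have hσ : (e.trans f.symm).trans f = e := by
    ext1 i
    simp
  refine ⟨e.trans f.symm, Finset.map_injective _ (?_ : relabel f _ = relabel f D),
    Finset.map_injective f.toEmbedding ?_⟩
  · rw [← relabel_trans, hσ, he, hf]
  · rw [Finset.map_map, ← Equiv.trans_toEmbedding, hσ, heX, hfY, hXY]

end IsNRCode

end Leaders

section Support

variable {m : ℕ}

/-- The support of a binary vector. -/
def support (x : Fin m → ZMod 2) : Finset (Fin m) := Finset.univ.filter fun i => x i ≠ 0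

lemma mem_support {x : Fin m → ZMod 2} {i : Fin m} : i ∈ support x ↔ x i ≠ 0 :=
  Finset.mem_filter_univ i

lemma support_injective : (support (m := m)).Injective := by
  intro x y h
  have hbit : ∀ a b : ZMod 2, (a ≠ 0 ↔ b ≠ 0) → a = b := by decide
  exact funext fun i => hbit _ _ (by rw [← mem_support, ← mem_support, h])

lemma support_sub (x y : Fin m → ZMod 2) : support (x - y) = symmDiff (support x) (support y) := by
  have hbit : ∀ a b : ZMod 2, a - b ≠ 0 ↔ a ≠ 0 ∧ ¬b ≠ 0 ∨ b ≠ 0 ∧ ¬a ≠ 0 := by decide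
  ext i
  simp only [Finset.mem_symmDiff, mem_support, Pi.sub_apply, hbit]

lemma support_comp_symm (σ : Equiv.Perm (Fin m)) (x : Fin m → ZMod 2) :
    support (fun i => x (σ.symm i)) = (support x).map σ.toEmbedding := by
  ext i
  simp only [mem_support, Finset.mem_map_equiv]

lemma hammingDist_eq_card_support_sub (x y : Fin m → ZMod 2) :
    hammingDist x y = (support (x - y)).card := by
  rw [hammingDist_comm, hammingDist_eq_hammingNorm, neg_add_eq_sub]
  rfl

lemma card_symmDiff_support_sub (x y c : Fin m → ZMod 2) :
    (symmDiff (support (x - c)) (support (y - c))).card = hammingDist x y := by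
  rw [← support_sub, sub_sub_sub_cancel_right, hammingDist_eq_card_support_sub]

/-- The supports of the words of the translate of `C` taking `c` to `0`. -/
noncomputable def translatedSupports (C : Set (Fin m → ZMod 2)) (c : Fin m → ZMod 2) :
    Finset (Finset (Fin m)) :=
  ((fun z => support (z - c)) '' C).toFinite.toFinset

variable {C : Set (Fin m → ZMod 2)}

lemma mem_translatedSupports {c : Fin m → ZMod 2} {A : Finset (Fin m)} :
    A ∈ translatedSupports C c ↔ ∃ z ∈ C, support (z - c) = A := by
  simp [translatedSupports]

lemma support_sub_injective (c : Fin m → ZMod 2) : (fun z => support (z - c)).Injective :=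
  support_injective.comp (sub_left_injective)

lemma support_sub_mem_translatedSupports {c z : Fin m → ZMod 2} :
    support (z - c) ∈ translatedSupports C c ↔ z ∈ C := by
  rw [translatedSupports, Set.Finite.mem_toFinset]
  exact (support_sub_injective c).mem_set_image

lemma empty_mem_translatedSupports {c : Fin m → ZMod 2} (hc : c ∈ C) :
    ∅ ∈ translatedSupports C c :=
  mem_translatedSupports.mpr ⟨c, hc, by simp [support]⟩

lemma isNRCode_translatedSupports {C : Set (Fin 16 → ZMod 2)} (hcard : C.ncard = 256)
    (hdist : ∀ x ∈ C, ∀ y ∈ C, x ≠ y → 6 ≤ hammingDist x y) (c : Fin 16 → ZMod 2) :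
    IsNRCode (translatedSupports C c) where
  card_index := Fintype.card_fin 16
  card_code := by
    rw [translatedSupports, ← Set.ncard_eq_toFinset_card,
      Set.ncard_image_of_injective _ (support_sub_injective c), hcard]
  six_le_dist := by
    simp only [mem_translatedSupports, forall_exists_index, and_imp, forall_apply_eq_imp_iff₂,
      card_symmDiff_support_sub]
    exact fun x hx y hy hne => hdist x hx y hy fun h => hne (h ▸ rfl)

end Support

section HammingAut

variable {m : ℕ} {C : Set (Fin m → ZMod 2)}

lemma distToCode_le {c : Fin m → ZMod 2} (hc : c ∈ C) (x : Fin m → ZMod 2) :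
    distToCode C x ≤ hammingDist x c :=
  Nat.sInf_le ⟨c, hc, rfl⟩

lemma exists_hammingDist_eq_distToCode (hC : C.Nonempty) (x : Fin m → ZMod 2) :
    ∃ c ∈ C, hammingDist x c = distToCode C x :=
  Nat.sInf_mem (s := {d | ∃ c ∈ C, hammingDist x c = d})
    (hC.elim fun c hc => ⟨_, c, hc, rfl⟩)

lemma card_support_sub_le {c : Fin m → ZMod 2} {x : Fin m → ZMod 2}
    (hx : hammingDist x c = distToCode C x) :
    ∀ A ∈ translatedSupports C c, (support (x - c)).card ≤ (symmDiff (support (x - c)) A).card := by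
  simp only [mem_translatedSupports, forall_exists_index, and_imp, forall_apply_eq_imp_iff₂,
    card_symmDiff_support_sub]
  intro z hz
  rw [← hammingDist_eq_card_support_sub, hx]
  exact distToCode_le hz x

lemma isHammingAut_one : IsHammingAut (1 : Equiv.Perm (Fin m → ZMod 2)) :=
  ⟨1, 0, fun x => (add_zero x).symm⟩

lemma isHammingAut_mul {f g : Equiv.Perm (Fin m → ZMod 2)} :
    IsHammingAut f → IsHammingAut g → IsHammingAut (f * g) := by
  rintro ⟨σ, v, hf⟩ ⟨τ, w, hg⟩
  refine ⟨σ * τ, (fun i => w (σ.symm i)) + v, fun x => ?_⟩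
  rw [Equiv.Perm.mul_apply, hf, hg, ← add_assoc]
  rfl

lemma isHammingAut_inv {f : Equiv.Perm (Fin m → ZMod 2)} :
    IsHammingAut f → IsHammingAut f⁻¹ := by
  rintro ⟨σ, v, hf⟩
  refine ⟨σ⁻¹, fun i => -v (σ i), fun x => Equiv.Perm.inv_eq_iff_eq.mpr ?_⟩
  rw [hf]
  ext i
  simp only [Equiv.Perm.inv_def, Equiv.symm_symm, Pi.add_apply, Equiv.apply_symm_apply,
    neg_add_cancel_right]

lemma hammingDist_apply_apply {f : Equiv.Perm (Fin m → ZMod 2)} (hf : IsHammingAut f)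
    (x y : Fin m → ZMod 2) : hammingDist (f x) (f y) = hammingDist x y := by
  obtain ⟨σ, v, hf⟩ := hf
  rw [hammingDist_eq_card_support_sub, hf, hf, add_sub_add_right_eq_sub,
    hammingDist_eq_card_support_sub x, ← (support (x - y)).card_map σ.toEmbedding,
    ← support_comp_symm]
  rfl

lemma distToCode_apply {f : Equiv.Perm (Fin m → ZMod 2)} (hf : IsHammingAut f)
    (hC : f '' C = C) (x : Fin m → ZMod 2) : distToCode C (f x) = distToCode C x := by
  conv_lhs => rw [← hC]
  simp only [distToCode, Set.exists_mem_image, hammingDist_apply_apply hf]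

/-- The group of the automorphisms of the Hamming graph that preserve `C`. -/
def automorphismGroup (C : Set (Fin m → ZMod 2)) : Subgroup (Equiv.Perm (Fin m → ZMod 2)) where
  carrier := {g | IsHammingAut g ∧ g '' C = C}
  one_mem' := ⟨isHammingAut_one, Set.image_id C⟩
  mul_mem' := fun ⟨hf, hfC⟩ ⟨hg, hgC⟩ => ⟨isHammingAut_mul hf hg, by
    rw [Equiv.Perm.coe_mul, Set.image_comp, hgC, hfC]⟩
  inv_mem' := fun {f} ⟨hf, hfC⟩ => ⟨isHammingAut_inv hf, by
    conv_lhs => rw [← hfC]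
    exact f.symm_image_image C⟩

lemma isCompletelyTransitive_of_forall_exists
    (h : ∀ x y, distToCode C x = distToCode C y → ∃ g ∈ automorphismGroup C, g x = y) :
    IsCompletelyTransitive C := by
  refine ⟨automorphismGroup C, fun g hg => hg, ?_⟩
  rintro _ x rfl
  ext y
  refine ⟨fun hy => h x y hy.symm, ?_⟩
  rintro ⟨g, ⟨hg, hgC⟩, rfl⟩
  exact distToCode_apply hg hgC x

lemma exists_mem_automorphismGroup_of_relabel_eq {σ : Equiv.Perm (Fin m)} {c d x y : Fin m → ZMod 2}
    (hσ : relabel σ (translatedSupports C c) = translatedSupports C d)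
    (hxy : (support (x - c)).map σ.toEmbedding = support (y - d)) :
    ∃ g ∈ automorphismGroup C, g x = y := by
  let g : Equiv.Perm (Fin m → ZMod 2) :=
    (Equiv.subRight c).trans ((σ.arrowCongr (Equiv.refl _)).trans (Equiv.addRight d))
  have hg (z : Fin m → ZMod 2) : support (g z - d) = (support (z - c)).map σ.toEmbedding := by
    rw [← support_comp_symm]
    congr 1
    exact add_sub_cancel_right _ d
  have hgC (z : Fin m → ZMod 2) : g z ∈ C ↔ z ∈ C := by
    rw [← support_sub_mem_translatedSupports (c := d), hg, ← hσ, map_mem_relabel,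
      support_sub_mem_translatedSupports]
  refine ⟨g, ⟨⟨σ, d - fun i => c (σ.symm i), fun z =>
    (sub_add_eq_add_sub _ _ d).trans (add_sub_assoc _ d _)⟩, ?_⟩,
    support_sub_injective d ((hg x).trans hxy)⟩
  exact (g.eq_preimage_iff_image_eq C C).mp (Set.ext fun z => (hgC z).symm)

end HammingAut

end NordstromRobinson

open NordstromRobinson

/-- Every binary `(16, 256, 6)` code is completely transitive; in particular the
Nordstrom-Robinson code is completely transitive. -/
theorem stmt_9 (C : Set (Fin 16 → ZMod 2)) (hcard : C.ncard = 256)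
    (hd : IsMinDist C 6) :
    IsCompletelyTransitive C := by
  have hne : C.Nonempty := Set.nonempty_of_ncard_ne_zero (by rw [hcard]; decide)
  refine isCompletelyTransitive_of_forall_exists fun x y hxy => ?_
  obtain ⟨c, hc, hxc⟩ := exists_hammingDist_eq_distToCode hne x
  obtain ⟨d, hd', hyd⟩ := exists_hammingDist_eq_distToCode hne y
  have hcard_eq : (support (x - c)).card = (support (y - d)).card := by
    rw [← hammingDist_eq_card_support_sub, ← hammingDist_eq_card_support_sub, hxc, hyd, hxy]
  obtain ⟨σ, hσ, hσx⟩ := (isNRCode_translatedSupports hcard hd.1 c).exists_relabel_eq_of_card_eq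
    (isNRCode_translatedSupports hcard hd.1 d) (empty_mem_translatedSupports hc)
    (empty_mem_translatedSupports hd') (card_support_sub_le hxc) (card_support_sub_le hyd) hcard_eq
  exact exists_mem_automorphismGroup_of_relabel_eq hσ hσx
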